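/- For every ε > 0 there exists a natural number k = k(ε) such that for every odd prime p, every real K ≥ 1, all sets A,B ⊆ F_p with 0 ∉ A, A nonempty, |B| ≥ p^ε and |A+B| ≤ K|A|, and every λ ∈ F_p with λ ≠ 0, the number of pairs (a1,a2) ∈ A×A with a1^{−1} − a2^{−1} = λ is at most K²|A|²/p + 2K|A|·p^{−1/2^{k+2}}. -/

import Mathlib

open Finset

/-- The sumset `A + B = {a + b : a ∈ A, b ∈ B}`. -/
def sumSet (p : ℕ) (A B : Finset (ZMod p)) : Finset (ZMod p) :=
  (A ×ˢ B).image fun x => x.1 + x.2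

open Finset

section PartA
set_option linter.unusedSectionVars false
variable {G : Type*} [Group G] [Fintype G] [DecidableEq G]

noncomputable def cv (f g : G → ℝ) (x : G) : ℝ := ∑ y, f y * g (y⁻¹ * x)

def SP (f : G → ℝ) : Prop := (∀ x, 0 ≤ f x) ∧ (∀ x, f x⁻¹ = f x) ∧ ∑ x, f x = 1

lemma cv_apply' (f g : G → ℝ) (x z : G) : cv f g (x⁻¹ * z) = ∑ y, f (x⁻¹ * y) * g (y⁻¹ * z) := by
  unfold cv
  rw [← Equiv.sum_comp (Equiv.mulLeft x⁻¹)]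
  simp [mul_assoc]

lemma cv_sum (f g : G → ℝ) : ∑ x, cv f g x = (∑ x, f x) * ∑ x, g x := by
  unfold cv
  rw [Finset.sum_comm, Finset.sum_mul]
  refine Finset.sum_congr rfl fun y _ => ?_
  rw [← Finset.mul_sum]
  congr 1
  exact Equiv.sum_comp (Equiv.mulLeft y⁻¹) g

lemma SP.cv {f : G → ℝ} (hf : SP f) : SP (cv f f) := by
  obtain ⟨h0, hs, h1⟩ := hf
  refine ⟨fun x => Finset.sum_nonneg fun y _ => mul_nonneg (h0 _) (h0 _), fun x => ?_, ?_⟩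
  · have := cv_apply' f f x 1
    rw [mul_one] at this
    rw [this]
    unfold _root_.cv
    refine Finset.sum_congr rfl fun y _ => ?_
    rw [mul_one, hs y, ← hs (x⁻¹ * y), mul_comm]
    simp
  · rw [cv_sum, h1]; norm_num

lemma cv_one {f : G → ℝ} (hf : SP f) : cv f f 1 = ∑ x, f x ^ 2 := by
  unfold cv
  refine Finset.sum_congr rfl fun y _ => ?_
  rw [mul_one, hf.2.1 y, sq]

lemma cv_le_one {f : G → ℝ} (hf : SP f) (x : G) : cv f f x ≤ cv f f 1 := by
  rw [cv_one hf]
  have h2 : ∑ y, f (y⁻¹ * x) ^ 2 = ∑ y, f y ^ 2 := by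
    rw [← ((Equiv.inv G).trans (Equiv.mulRight x)).sum_comp (fun y => f y ^ 2)]
    rfl
  have : cv f f x ≤ ∑ y, (f y ^ 2 + f (y⁻¹ * x) ^ 2) / 2 :=
    Finset.sum_le_sum fun y _ => by nlinarith [sq_nonneg (f y - f (y⁻¹ * x))]
  rw [← Finset.sum_div, Finset.sum_add_distrib, h2] at this
  linarith

lemma cv_le {f g : G → ℝ} {M : ℝ} (hf : SP f) (hg : ∀ x, g x ≤ M) (x : G) : cv f g x ≤ M := by
  calc cv f g x ≤ ∑ y, f y * M := Finset.sum_le_sum fun y _ => mul_le_mul_of_nonneg_left (hg _) (hf.1 _)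
    _ = M := by rw [← Finset.sum_mul, hf.2.2, one_mul]

set_option maxHeartbeats 1000000 in
lemma bsg {ν : G → ℝ} (hν : SP ν) {M D : ℝ} (hM : 0 < M) (hD : 1 ≤ D) (hsup : ∀ x, ν x ≤ M)
    (hE : M / D ≤ cv (cv ν ν) (cv ν ν) 1) :
    ∃ A : Finset G, 1 / (4 * D) ≤ ∑ x ∈ A, ν x ∧ ∀ x ∈ A, ∀ x' ∈ A,
      M / (1024 * D ^ 5) ≤ cv (cv (cv ν ν) (cv ν ν)) (cv (cv ν ν) (cv ν ν)) (x⁻¹ * x') := by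
  classical
  set ν2 := cv ν ν with hν2
  set ν4 := cv ν2 ν2 with hν4
  have s2 : SP ν2 := hν.cv
  have s4 : SP ν4 := s2.cv
  have hD0 : 0 < D := by linarith
  have b2 : ∀ x, ν2 x ≤ M := fun x => cv_le hν hsup x
  set β : ℝ := 1 / (16 * D ^ 2) with hβ
  have hβ0 : 0 < β := by positivity
  set F : G → G → ℝ := fun x y => ν2 (x⁻¹ * y) with hF
  have F0 : ∀ x y, 0 ≤ F x y := fun x y => s2.1 _
  have F1 : ∀ x y, F x y ≤ M := fun x y => b2 _
  have Fs : ∀ x y, F x y = F y x := fun x y => by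
    simp only [hF]; rw [← s2.2.1]; simp
  set dg : G → ℝ := fun y => ∑ x, ν x * F x y with hdg
  have dgcv : ∀ y, dg y = cv ν ν2 y := fun y => rfl
  have E1 : ∑ y, ν y * dg y = ν4 1 := by
    have h1 : ∑ y, ν y * dg y = ∑ x, ∑ y, ν x * ν y * ν2 (x⁻¹ * y) := by
      simp only [hdg, hF, Finset.mul_sum]
      rw [Finset.sum_comm]
      exact Finset.sum_congr rfl fun x _ => Finset.sum_congr rfl fun y _ => by ring
    have h2 : ∀ x, ∑ y, ν x * ν y * ν2 (x⁻¹ * y) = ∑ z, ν x * ν (x * z) * ν2 z := by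
      intro x
      rw [← Equiv.sum_comp (Equiv.mulLeft x)]
      simp
    rw [h1, Finset.sum_congr rfl fun x _ => h2 x, Finset.sum_comm, hν4, cv_one s2]
    refine Finset.sum_congr rfl fun z _ => ?_
    have : ν2 z = ∑ x, ν x * ν (x * z) := by
      rw [hν2]; unfold cv
      rw [← Equiv.sum_comp (Equiv.inv G)]
      simp [hν.2.1]
    rw [← Finset.sum_mul, ← this, sq]
  have E2 : M ^ 2 / D ^ 2 ≤ ∑ y, ν y * dg y ^ 2 := by
    have hcs : (∑ y, ν y * dg y) ^ 2 ≤ (∑ y, ν y) * ∑ y, ν y * dg y ^ 2 :=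
      Finset.sum_sq_le_sum_mul_sum_of_sq_le_mul _ (fun i _ => hν.1 i)
        (fun i _ => mul_nonneg (hν.1 i) (sq_nonneg _)) (fun i _ => le_of_eq (by ring))
    rw [hν.2.2, one_mul, E1] at hcs
    refine le_trans ?_ hcs
    rw [← div_pow]
    exact pow_le_pow_left₀ (by positivity) hE 2
  set bad : G → G → Prop := fun x x' => ν4 (x⁻¹ * x') < β * M with hbad
  have bads : ∀ x x', bad x x' ↔ bad x' x := fun x x' => by
    simp only [hbad]; rw [← s4.2.1 (x⁻¹ * x')]; simp
  set bd : G → ℝ := fun y => ∑ x, ∑ x', if bad x x' then ν x * F x y * (ν x' * F x' y) else 0 with hbd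
  have E3 : ∑ y, ν y * bd y ≤ β * M ^ 2 := by
    have h1 : ∑ y, ν y * bd y = ∑ x, ∑ x', if bad x x' then ν x * ν x' * ∑ y, ν y * (F x y * F x' y) else 0 := by
      simp only [hbd, Finset.mul_sum]
      rw [Finset.sum_comm]
      refine Finset.sum_congr rfl fun x _ => ?_
      rw [Finset.sum_comm]
      refine Finset.sum_congr rfl fun x' _ => ?_
      split_ifs
      · refine Finset.sum_congr rfl fun y _ => by ring
      · simp
    rw [h1]
    have h2 : ∀ x x', ∑ y, ν y * (F x y * F x' y) ≤ M * ν4 (x⁻¹ * x') := by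
      intro x x'
      rw [hν4, cv_apply', Finset.mul_sum]
      refine Finset.sum_le_sum fun y _ => ?_
      have : ν2 (y⁻¹ * x') = F x' y := by rw [Fs]
      rw [this]
      exact mul_le_mul_of_nonneg_right (hsup y) (mul_nonneg (F0 _ _) (F0 _ _))
    calc _ ≤ ∑ x, ∑ x', ν x * ν x' * (β * M ^ 2) := by
            refine Finset.sum_le_sum fun x _ => Finset.sum_le_sum fun x' _ => ?_
            split_ifs with hb
            · refine mul_le_mul_of_nonneg_left ?_ (mul_nonneg (hν.1 _) (hν.1 _))
              refine (h2 x x').trans ?_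
              have : ν4 (x⁻¹ * x') ≤ β * M := le_of_lt hb
              nlinarith
            · exact mul_nonneg (mul_nonneg (hν.1 _) (hν.1 _)) (by positivity)
      _ = β * M ^ 2 := by
            simp_rw [← Finset.sum_mul, ← Finset.mul_sum, hν.2.2]; simp [hν.2.2]
  obtain ⟨y, hy⟩ : ∃ y, M ^ 2 / (2 * D ^ 2) ≤ dg y ^ 2 - 8 * bd y := by
    by_contra hcon
    push Not at hcon
    have : ∑ y, ν y * (dg y ^ 2 - 8 * bd y) < ∑ y, ν y * (M ^ 2 / (2 * D ^ 2)) := by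
      have hex : ∃ y, 0 < ν y := by
        by_contra hh
        push Not at hh
        have := Finset.sum_nonpos (s := univ) (fun i _ => hh i)
        rw [hν.2.2] at this; linarith
      obtain ⟨y0, hy0⟩ := hex
      exact Finset.sum_lt_sum (fun i _ => mul_le_mul_of_nonneg_left (hcon i).le (hν.1 i))
        ⟨y0, mem_univ _, mul_lt_mul_of_pos_left (hcon y0) hy0⟩
    rw [← Finset.sum_mul, hν.2.2, one_mul] at this
    have h3 : ∑ y, ν y * (dg y ^ 2 - 8 * bd y) = ∑ y, ν y * dg y ^ 2 - 8 * ∑ y, ν y * bd y := by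
      rw [Finset.mul_sum, ← Finset.sum_sub_distrib]
      exact Finset.sum_congr rfl fun i _ => by ring
    rw [h3] at this
    have h4 : β * M ^ 2 = M ^ 2 / D ^ 2 / 16 := by rw [hβ]; field_simp
    have h5 : M ^ 2 / (2 * D ^ 2) = M ^ 2 / D ^ 2 / 2 := by field_simp
    linarith
  set w : G → ℝ := fun x => ν x * F x y with hw
  have w0 : ∀ x, 0 ≤ w x := fun x => mul_nonneg (hν.1 _) (F0 _ _)
  have wM : ∀ x, w x ≤ M * ν x := fun x => by
    simp only [hw]; rw [mul_comm]; exact mul_le_mul_of_nonneg_right (F1 _ _) (hν.1 _)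
  have wM2 : ∀ x, w x ≤ M ^ 2 := fun x => (wM x).trans (by nlinarith [hsup x])
  set d := dg y with hd
  have dw : d = ∑ x, w x := rfl
  have d0 : 0 ≤ d := Finset.sum_nonneg fun x _ => w0 x
  have bd0 : 0 ≤ bd y := Finset.sum_nonneg fun x _ => Finset.sum_nonneg fun x' _ => by
    split_ifs
    · exact mul_nonneg (w0 x) (w0 x')
    · exact le_rfl
  have dlow : M / (2 * D) ≤ d := by
    refine abs_le_of_sq_le_sq' (a := M / (2 * D)) ?_ d0 |>.2
    have : (M / (2 * D)) ^ 2 = M ^ 2 / (2 * D ^ 2) / 2 := by ring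
    have h6 : 0 ≤ M ^ 2 / (2 * D ^ 2) := by positivity
    linarith
  have dpos : 0 < d := lt_of_lt_of_le (by positivity) dlow
  have bdd : 8 * bd y ≤ d ^ 2 := by
    have h6 : 0 ≤ M ^ 2 / (2 * D ^ 2) := by positivity
    linarith
  set bw : G → ℝ := fun x => ∑ x', if bad x x' then w x' else 0 with hbw
  have bdbw : bd y = ∑ x, w x * bw x := by
    simp only [hbd, hbw, Finset.mul_sum]
    refine Finset.sum_congr rfl fun x _ => Finset.sum_congr rfl fun x' _ => ?_
    split_ifs <;> simp [hw]
  set A : Finset G := univ.filter fun x => bw x ≤ d / 4 with hA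
  have bw0 : ∀ x, 0 ≤ bw x := fun x => Finset.sum_nonneg fun x' _ => by
    split_ifs
    · exact w0 _
    · exact le_rfl
  have wA : d / 2 ≤ ∑ x ∈ A, w x := by
    have h1 : (∑ x ∈ univ.filter (fun x => ¬ bw x ≤ d / 4), w x) * (d / 4) ≤ bd y := by
      rw [bdbw, Finset.sum_mul]
      calc _ ≤ ∑ x ∈ univ.filter (fun x => ¬ bw x ≤ d / 4), w x * bw x := by
              refine Finset.sum_le_sum fun x hx => mul_le_mul_of_nonneg_left ?_ (w0 x)
              have := (mem_filter.1 hx).2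
              linarith
        _ ≤ _ := Finset.sum_le_sum_of_subset_of_nonneg (subset_univ _)
              fun x _ _ => mul_nonneg (w0 x) (bw0 x)
    have h2 : d = ∑ x ∈ A, w x + ∑ x ∈ univ.filter (fun x => ¬ bw x ≤ d / 4), w x := by
      rw [Finset.sum_filter_add_sum_filter_not]
    nlinarith
  refine ⟨A, ?_, ?_⟩
  · have h1 : ∑ x ∈ A, w x ≤ M * ∑ x ∈ A, ν x := by
      rw [Finset.mul_sum]; exact Finset.sum_le_sum fun x _ => wM x
    have h2 : M * (1 / (4 * D)) ≤ M * ∑ x ∈ A, ν x := by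
      have : M * (1 / (4 * D)) = M / (2 * D) / 2 := by field_simp; norm_num
      linarith
    exact le_of_mul_le_mul_left h2 hM
  · intro x hx x' hx'
    rw [cv_apply']
    set Gd : Finset G := univ.filter fun z => ¬ bad x z ∧ ¬ bad z x' with hGd
    have hw1 : d / 2 ≤ ∑ z ∈ Gd, w z := by
      have h1 : d ≤ ∑ z ∈ Gd, w z + bw x + bw x' := by
        rw [dw, hGd, Finset.sum_filter, hbw, ← Finset.sum_add_distrib, ← Finset.sum_add_distrib]
        refine Finset.sum_le_sum fun z _ => ?_
        have hwz := w0 z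
        have hb := bads x' z
        by_cases c1 : bad x z
        · rw [if_neg (by tauto), if_pos c1]
          split_ifs <;> linarith
        · by_cases c2 : bad z x'
          · rw [if_neg (by tauto), if_neg c1, if_pos (hb.2 c2)]; linarith
          · rw [if_pos ⟨c1, c2⟩, if_neg c1, if_neg (fun h => c2 (hb.1 h))]; linarith
      have := (mem_filter.1 hx).2
      have := (mem_filter.1 hx').2
      linarith
    have hw2 : ∑ z ∈ Gd, w z ≤ Gd.card * M ^ 2 := by
      have := Finset.sum_le_card_nsmul Gd w (M ^ 2) (fun z _ => wM2 z)
      simpa using this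
    calc M / (1024 * D ^ 5) = β ^ 2 * (M / (2 * D) / 2) := by rw [hβ]; field_simp; norm_num
      _ ≤ β ^ 2 * (Gd.card * M ^ 2) := by
          refine mul_le_mul_of_nonneg_left ?_ (by positivity); linarith
      _ = ∑ z ∈ Gd, (β * M) * (β * M) := by simp; ring
      _ ≤ ∑ z ∈ Gd, ν4 (x⁻¹ * z) * ν4 (z⁻¹ * x') := by
          refine Finset.sum_le_sum fun z hz => ?_
          have := (mem_filter.1 hz).2
          simp only [hbad, not_lt] at this
          exact mul_le_mul this.1 this.2 (by positivity) (s4.1 _)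
      _ ≤ _ := Finset.sum_le_sum_of_subset_of_nonneg (subset_univ _)
            fun z _ _ => mul_nonneg (s4.1 _) (s4.1 _)

end PartA

open Finset

section PartA2
set_option linter.unusedSectionVars false
open scoped Pointwise
variable {G : Type*} [Group G] [Fintype G] [DecidableEq G]

def rp (A : Finset G) (x : G) : Finset (G × G) := (A ×ˢ A).filter fun q => q.1 * q.2⁻¹ = x

lemma rp_sum (A : Finset G) : ∑ x, (rp A x).card = A.card ^ 2 := by
  unfold rp
  rw [← Finset.card_eq_sum_card_fiberwise (f := fun q : G × G => q.1 * q.2⁻¹) (s := A ×ˢ A) (t := univ)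
    (fun _ _ => by simp)]
  rw [card_product, sq]

lemma rp_le (A : Finset G) (x : G) : (rp A x).card ≤ A.card := by
  refine Finset.card_le_card_of_injOn (fun q => q.1) (fun q hq => ?_) ?_
  · have := mem_filter.1 hq
    exact (mem_product.1 this.1).1
  · intro q hq q' hq' h
    have h1 := (mem_filter.1 hq).2
    have h2 := (mem_filter.1 hq').2
    simp only at h
    rw [← h2, h] at h1
    have := mul_left_cancel h1
    exact Prod.ext h (inv_injective this)

lemma rp_energy (A : Finset G) : A.card ^ 4 ≤ (A⁻¹ * A).card * ∑ x, (rp A x).card ^ 2 := by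
  have h1 := le_card_mul_mul_mulEnergy A⁻¹ A
  rw [card_inv] at h1
  have h2 : mulEnergy A⁻¹ A = ∑ x, (rp A x).card ^ 2 := by
    have h3 : ∑ x, (rp A x).card ^ 2 =
        ((((A ×ˢ A) ×ˢ (A ×ˢ A))).filter fun q => q.1.1 * q.1.2⁻¹ = q.2.1 * q.2.2⁻¹).card := by
      rw [Finset.card_eq_sum_card_fiberwise (f := fun q : (G × G) × G × G => q.1.1 * q.1.2⁻¹) (t := univ)
        (fun _ _ => by simp)]
      refine Finset.sum_congr rfl fun x _ => ?_
      rw [sq, ← card_product]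
      congr 1
      ext q
      simp only [rp, mem_product, mem_filter]
      constructor
      · rintro ⟨⟨h1, h2⟩, h3, h4⟩
        exact ⟨⟨⟨h1, h3⟩, by rw [h2, h4]⟩, h2⟩
      · rintro ⟨⟨⟨h1, h3⟩, h4⟩, h2⟩
        exact ⟨⟨h1, h2⟩, h3, by rw [← h4, h2]⟩
    rw [h3]
    unfold mulEnergy
    refine Finset.card_bij' (fun q _ => ((q.1.2⁻¹, q.1.1⁻¹), (q.2.2, q.2.1)))
      (fun q _ => ((q.1.2⁻¹, q.1.1⁻¹), (q.2.2, q.2.1))) ?_ ?_ ?_ ?_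
    · rintro ⟨⟨a, b⟩, c, d⟩ h
      simp only [mem_filter, mem_product, mem_inv'] at h ⊢
      refine ⟨⟨⟨h.1.1.2, h.1.1.1⟩, h.1.2.2, h.1.2.1⟩, ?_⟩
      have := h.2
      rw [inv_inv, inv_mul_eq_iff_eq_mul, ← mul_assoc, ← this, mul_assoc, mul_inv_cancel, mul_one]
    · rintro ⟨⟨a, b⟩, c, d⟩ h
      simp only [mem_filter, mem_product, mem_inv', inv_inv] at h ⊢
      refine ⟨⟨⟨h.1.1.2, h.1.1.1⟩, h.1.2.2, h.1.2.1⟩, ?_⟩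
      have := h.2
      have h9 : b * a⁻¹ = d * c⁻¹ := by
        rw [← inv_inj]; simpa using this
      rw [inv_mul_eq_iff_eq_mul, ← mul_assoc, h9]; simp
    · rintro ⟨⟨a, b⟩, c, d⟩ h; simp
    · rintro ⟨⟨a, b⟩, c, d⟩ h; simp
  rw [h2] at h1
  calc A.card ^ 4 = A.card ^ 2 * A.card ^ 2 := by ring
    _ ≤ _ := h1

lemma approx_group (A : Finset G) (hA : A.Nonempty) {K : ℝ} (hK : 1 ≤ K)
    (h : ((A⁻¹ * A).card : ℝ) ≤ K * A.card) :
    ∃ S : Finset G, S⁻¹ = S ∧ 1 ∈ S ∧ (A.card : ℝ) ≤ 2 * K * S.card ∧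
      (∀ n, ((S ^ n).card : ℝ) ≤ (2 * K ^ 2) ^ n * A.card) ∧
      ∃ F : Finset G, (F.card : ℝ) ≤ 4 * K ^ 3 ∧ A⁻¹ ⊆ F * (S * S) := by
  classical
  have hA0 : (0 : ℝ) < A.card := by exact_mod_cast hA.card_pos
  set S : Finset G := univ.filter fun x => (A.card : ℝ) ≤ 2 * K * (rp A x).card with hS
  have hSi : S⁻¹ = S := by
    ext x
    simp only [mem_inv', hS, mem_filter, mem_univ, true_and]
    have : (rp A x⁻¹).card = (rp A x).card := by
      refine Finset.card_bij' (fun q _ => q.swap) (fun q _ => q.swap) ?_ ?_ ?_ ?_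
      · rintro ⟨a, b⟩ hq
        simp only [rp, mem_filter, mem_product, Prod.swap] at hq ⊢
        refine ⟨hq.1.symm, ?_⟩
        rw [← inv_inj, ← hq.2]; simp
      · rintro ⟨a, b⟩ hq
        simp only [rp, mem_filter, mem_product, Prod.swap] at hq ⊢
        refine ⟨hq.1.symm, ?_⟩
        rw [← hq.2]; simp
      · simp
      · simp
    rw [this]
  have hS1 : (1 : G) ∈ S := by
    simp only [hS, mem_filter, mem_univ, true_and]
    have : A.card ≤ (rp A 1).card := by
      refine Finset.card_le_card_of_injOn (fun a => (a, a)) (fun a ha => ?_) ?_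
      · have ha' : a ∈ A := ha
        simp [rp, ha']
      · intro a _ b _ hab; exact (Prod.mk.inj hab).1
    have : (A.card : ℝ) ≤ (rp A 1).card := by exact_mod_cast this
    nlinarith
  have step : ∀ Y : Finset G, ((A⁻¹ * (S * Y)).card : ℝ) ≤ 2 * K ^ 2 * (A⁻¹ * Y).card := by
    intro Y
    have hch : ∀ z : G, ∃ t : G × G × G, z ∈ A⁻¹ * (S * Y) → t.1 ∈ A ∧ t.2.1 ∈ S ∧ t.2.2 ∈ Y ∧
        t.1⁻¹ * (t.2.1 * t.2.2) = z := by
      intro z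
      by_cases hz : z ∈ A⁻¹ * (S * Y)
      · obtain ⟨a, ha, w, hw, rfl⟩ := mem_mul.1 hz
        obtain ⟨s, hs, y, hy, rfl⟩ := mem_mul.1 hw
        exact ⟨(a⁻¹, s, y), fun _ => ⟨mem_inv'.1 ha, hs, hy, by simp⟩⟩
      · exact ⟨(1, 1, 1), fun h => absurd h hz⟩
    choose t ht using hch
    have hinj : ((A⁻¹ * (S * Y)).sigma fun z => rp A (t z).2.1).card ≤
        ((A⁻¹ * A) ×ˢ (A⁻¹ * Y)).card := by
      refine Finset.card_le_card_of_injOn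
        (fun q => ((t q.1).1⁻¹ * q.2.1, q.2.2⁻¹ * (t q.1).2.2)) ?_ ?_
      · rintro ⟨z, a, b⟩ hq
        simp only [coe_sigma, Set.mem_sigma_iff, mem_coe] at hq
        obtain ⟨h1, h2, h3, h4⟩ := ht z hq.1
        have h5 := (mem_product.1 (mem_filter.1 hq.2).1)
        simp only [coe_product, Set.mem_prod, mem_coe]
        exact ⟨mul_mem_mul (inv_mem_inv h1) h5.1, mul_mem_mul (inv_mem_inv h5.2) h3⟩
      · rintro ⟨z, a, b⟩ hq ⟨z', a', b'⟩ hq' he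
        simp only [coe_sigma, Set.mem_sigma_iff, mem_coe] at hq hq'
        obtain ⟨h1, h2, h3, h4⟩ := ht z hq.1
        obtain ⟨h1', h2', h3', h4'⟩ := ht z' hq'.1
        have h5 := (mem_filter.1 hq.2).2
        have h5' := (mem_filter.1 hq'.2).2
        simp only [Prod.mk.injEq] at he
        simp only at h5 h5'
        have hzz : z = z' := by
          rw [← h4, ← h4', ← h5, ← h5']
          have : (t z).1⁻¹ * (a * b⁻¹ * (t z).2.2) = ((t z).1⁻¹ * a) * (b⁻¹ * (t z).2.2) := by group
          rw [this, he.1, he.2]; group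
        subst hzz
        have ha : a = a' := mul_left_cancel he.1
        have hb : b = b' := inv_injective (mul_right_cancel he.2)
        rw [ha, hb]
    rw [card_sigma, card_product] at hinj
    have h6 : ((A⁻¹ * (S * Y)).card : ℝ) * A.card ≤
        2 * K * ∑ z ∈ A⁻¹ * (S * Y), ((rp A (t z).2.1).card : ℝ) := by
      rw [Finset.mul_sum, ← nsmul_eq_mul]
      refine Finset.card_nsmul_le_sum _ _ _ fun z hz => ?_
      exact (mem_filter.1 (ht z hz).2.1).2
    have h7 : ∑ z ∈ A⁻¹ * (S * Y), ((rp A (t z).2.1).card : ℝ) ≤ (A⁻¹ * A).card * (A⁻¹ * Y).card := by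
      exact_mod_cast hinj
    have h8 : ((A⁻¹ * (S * Y)).card : ℝ) * A.card ≤ (2 * K ^ 2 * (A⁻¹ * Y).card) * A.card := by
      calc _ ≤ _ := h6
        _ ≤ 2 * K * ((A⁻¹ * A).card * (A⁻¹ * Y).card) := by
            exact mul_le_mul_of_nonneg_left h7 (by positivity)
        _ ≤ 2 * K * ((K * A.card) * (A⁻¹ * Y).card) := by gcongr
        _ = _ := by ring
    exact le_of_mul_le_mul_right h8 hA0
  have hAS : ∀ n, ((A⁻¹ * S ^ n).card : ℝ) ≤ (2 * K ^ 2) ^ n * A.card := by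
    intro n
    induction n with
    | zero => simp
    | succ n ih =>
      rw [pow_succ' S, pow_succ' (2 * K ^ 2)]
      refine (step _).trans ?_
      have := mul_le_mul_of_nonneg_left ih (show 0 ≤ 2 * K ^ 2 by positivity)
      linarith
  have hSc : (A.card : ℝ) ≤ 2 * K * S.card := by
    have he : (A.card : ℝ) ^ 4 ≤ (A⁻¹ * A).card * ∑ x, ((rp A x).card : ℝ) ^ 2 := by
      exact_mod_cast rp_energy A
    have hs : ∑ x, ((rp A x).card : ℝ) = (A.card : ℝ) ^ 2 := by exact_mod_cast rp_sum A
    have hb : 2 * K * ∑ x, ((rp A x).card : ℝ) ^ 2 ≤ 2 * K * S.card * A.card ^ 2 + A.card ^ 3 := by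
      have : ∀ x, 2 * K * ((rp A x).card : ℝ) ^ 2 ≤
          (if x ∈ S then 2 * K * (A.card : ℝ) ^ 2 else 0) + A.card * (rp A x).card := by
        intro x
        have h1 : ((rp A x).card : ℝ) ≤ A.card := by exact_mod_cast rp_le A x
        have h0 : (0 : ℝ) ≤ (rp A x).card := by positivity
        split_ifs with hx
        · have : ((rp A x).card : ℝ) ^ 2 ≤ A.card ^ 2 := by gcongr
          have := mul_le_mul_of_nonneg_left this (show 0 ≤ 2 * K by linarith)
          have : 0 ≤ (A.card : ℝ) * (rp A x).card := by positivity
          linarith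
        · simp only [hS, mem_filter, mem_univ, true_and, not_le] at hx
          nlinarith
      rw [Finset.mul_sum]
      refine (Finset.sum_le_sum fun x _ => this x).trans ?_
      rw [Finset.sum_add_distrib, ← Finset.mul_sum, hs]
      simp only [sum_ite_mem, univ_inter, sum_const, nsmul_eq_mul]
      apply le_of_eq; ring
    have h2 : (A.card : ℝ) ^ 4 ≤ K * A.card * ∑ x, ((rp A x).card : ℝ) ^ 2 :=
      he.trans (mul_le_mul_of_nonneg_right h (Finset.sum_nonneg fun _ _ => by positivity))
    have h3 : A.card * (A.card : ℝ) ^ 3 ≤ A.card * (2 * K * S.card * A.card ^ 2) := by nlinarith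
    have h4 := le_of_mul_le_mul_left h3 hA0
    have h5 : (A.card : ℝ) ^ 2 * A.card ≤ A.card ^ 2 * (2 * K * S.card) := by nlinarith
    exact le_of_mul_le_mul_left h5 (by positivity)
  refine ⟨S, hSi, hS1, hSc, ?_, ?_⟩
  · intro n
    refine le_trans ?_ (hAS n)
    exact_mod_cast Finset.card_le_card_mul_left (hA.inv)
  · have h1 := hAS 1
    rw [pow_one, pow_one] at h1
    obtain ⟨F, -, hF, hc⟩ := Finset.ruzsa_covering_mul (A := A⁻¹) (B := S) (K := 4 * K ^ 3) ⟨1, hS1⟩ (by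
      refine h1.trans ?_
      have := mul_le_mul_of_nonneg_left hSc (show 0 ≤ 2 * K ^ 2 by positivity)
      linarith)
    refine ⟨F, hF, ?_⟩
    rwa [div_eq_mul_inv, hSi] at hc

end PartA2

open Finset

section PartB
set_option linter.unusedSectionVars false
open scoped Pointwise
variable {F : Type*} [Field F] [Fintype F] [DecidableEq F]

abbrev SLF (F : Type*) [Field F] := Matrix.SpecialLinearGroup (Fin 2) F

def ac (g : SLF F) (v : F × F) : F × F :=
  (g.1 0 0 * v.1 + g.1 0 1 * v.2, g.1 1 0 * v.1 + g.1 1 1 * v.2)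

lemma ac_mul (g h : SLF F) (v : F × F) : ac (g * h) v = ac g (ac h v) := by
  simp only [ac, Matrix.SpecialLinearGroup.coe_mul, Matrix.mul_apply, Fin.sum_univ_two]
  ext <;> simp <;> ring

lemma ac_one (v : F × F) : ac (1 : SLF F) v = v := by
  simp [ac]

lemma ac_inv_of {g : SLF F} {v w : F × F} (h : ac g v = w) : ac g⁻¹ w = v := by
  rw [← h, ← ac_mul, inv_mul_cancel, ac_one]

lemma ac_smul (g : SLF F) (v : F × F) (c : F) : ac g (c * v.1, c * v.2) = (c * (ac g v).1, c * (ac g v).2) := by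
  simp only [ac]; ext <;> simp <;> ring

lemma ac_ne_zero (g : SLF F) {v : F × F} (hv : v ≠ 0) : ac g v ≠ 0 := by
  intro h
  apply hv
  have := ac_inv_of h
  rw [← this]; simp [ac]

lemma dt (g : SLF F) : g.1 0 0 * g.1 1 1 - g.1 0 1 * g.1 1 0 = 1 := by
  have := g.2
  rwa [Matrix.det_fin_two] at this

lemma sl_ext {g h : SLF F} (h1 : g.1 0 0 = h.1 0 0) (h2 : g.1 0 1 = h.1 0 1) (h3 : g.1 1 0 = h.1 1 0)
    (h4 : g.1 1 1 = h.1 1 1) : g = h := by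
  apply Subtype.ext
  ext i j
  fin_cases i <;> fin_cases j <;> assumption

def nn (v : F × F) (t : F) : SLF F :=
  ⟨!![1 - t * v.1 * v.2, t * v.1 ^ 2; -(t * v.2 ^ 2), 1 + t * v.1 * v.2], by
    rw [Matrix.det_fin_two_of]; ring⟩

lemma nn00 (v : F × F) (t : F) : (nn v t).1 0 0 = 1 - t * v.1 * v.2 := rfl
lemma nn01 (v : F × F) (t : F) : (nn v t).1 0 1 = t * v.1 ^ 2 := rfl
lemma nn10 (v : F × F) (t : F) : (nn v t).1 1 0 = -(t * v.2 ^ 2) := rfl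
lemma nn11 (v : F × F) (t : F) : (nn v t).1 1 1 = 1 + t * v.1 * v.2 := rfl

def tr2 (g : SLF F) : F := g.1 0 0 + g.1 1 1

def VV (F : Type*) [Field F] [Fintype F] [DecidableEq F] : Finset (SLF F) :=
  univ.filter fun g => g ≠ 1 ∧ tr2 g = 2

lemma mem_VV {g : SLF F} : g ∈ VV F ↔ g ≠ 1 ∧ tr2 g = 2 := by simp [VV]

lemma tr2_mul (g h : SLF F) : tr2 (g * h) =
    g.1 0 0 * h.1 0 0 + g.1 0 1 * h.1 1 0 + (g.1 1 0 * h.1 0 1 + g.1 1 1 * h.1 1 1) := by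
  simp [tr2, Matrix.mul_apply, Fin.sum_univ_two]

lemma tr2_comm (g h : SLF F) : tr2 (g * h) = tr2 (h * g) := by
  rw [tr2_mul, tr2_mul]; ring

lemma nn_fix (v : F × F) (t : F) : ac (nn v t) v = v := by
  simp only [ac, nn00, nn01, nn10, nn11]; ext <;> simp <;> ring

lemma nn_zero (v : F × F) : nn v (0 : F) = 1 := by
  apply sl_ext <;> simp [nn00, nn01, nn10, nn11]

lemma nn_of_fix {g : SLF F} {v : F × F} (hv : v ≠ 0) (h : ac g v = v) : ∃ t, g = nn v t := by
  have hd := dt g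
  have h1 : g.1 0 0 * v.1 + g.1 0 1 * v.2 = v.1 := congrArg Prod.fst h
  have h2 : g.1 1 0 * v.1 + g.1 1 1 * v.2 = v.2 := congrArg Prod.snd h
  generalize g.1 0 0 = a, g.1 0 1 = b, g.1 1 0 = c, g.1 1 1 = d at hd h1 h2
  by_cases hx : v.1 = 0
  · have hy : v.2 ≠ 0 := fun hy => hv (Prod.ext hx hy)
    refine ⟨-(g.1 1 0) / v.2 ^ 2, ?_⟩
    have hd := dt g
    have h1 : g.1 0 0 * v.1 + g.1 0 1 * v.2 = v.1 := congrArg Prod.fst h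
    have h2 : g.1 1 0 * v.1 + g.1 1 1 * v.2 = v.2 := congrArg Prod.snd h
    rw [hx] at h1 h2
    have hb : g.1 0 1 = 0 := by
      have : g.1 0 1 * v.2 = 0 := by linear_combination h1
      exact (mul_eq_zero.1 this).resolve_right hy
    have hdd : g.1 1 1 = 1 := by
      have : (g.1 1 1 - 1) * v.2 = 0 := by linear_combination h2
      have := (mul_eq_zero.1 this).resolve_right hy
      linear_combination this
    have haa : g.1 0 0 = 1 := by rw [hb, hdd] at hd; linear_combination hd
    apply sl_ext
    · rw [nn00, hx, haa]; ring
    · rw [nn01, hx, hb]; ring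
    · rw [nn10]; field_simp
    · rw [nn11, hx, hdd]; ring
  · refine ⟨g.1 0 1 / v.1 ^ 2, ?_⟩
    have hd := dt g
    have h1 : g.1 0 0 * v.1 + g.1 0 1 * v.2 = v.1 := congrArg Prod.fst h
    have h2 : g.1 1 0 * v.1 + g.1 1 1 * v.2 = v.2 := congrArg Prod.snd h
    have e1 : (g.1 1 1 - 1) * v.1 = g.1 0 1 * v.2 := by
      linear_combination v.1 * hd - g.1 1 1 * h1 + g.1 0 1 * h2
    apply sl_ext
    · rw [nn00]; field_simp; linear_combination h1
    · rw [nn01]; field_simp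
    · rw [nn10]; field_simp
      linear_combination (v.1) * h2 - v.2 * e1
    · rw [nn11]; field_simp; linear_combination e1

lemma nn_mem {v : F × F} (hv : v ≠ 0) {t : F} (ht : t ≠ 0) : nn v t ∈ VV F := by
  rw [mem_VV]
  constructor
  · intro h
    apply hv
    have h1 : (nn v t).1 0 1 = 0 := by rw [h]; simp
    have h2 : (nn v t).1 1 0 = 0 := by rw [h]; simp
    rw [nn01] at h1; rw [nn10] at h2
    ext <;> simp_all
  · simp only [tr2, nn00, nn11]; ring

lemma exists_nn {g : SLF F} (hg : g ∈ VV F) : ∃ v t, v ≠ 0 ∧ t ≠ 0 ∧ g = nn v t := by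
  obtain ⟨h1, h2⟩ := mem_VV.1 hg
  have hd := dt g
  unfold tr2 at h2
  have : ∃ v : F × F, v ≠ 0 ∧ ac g v = v := by
    by_cases hv : ((g.1 0 1, 1 - g.1 0 0) : F × F) ≠ 0
    · refine ⟨_, hv, ?_⟩
      simp only [ac]
      ext
      · simp; ring
      · simp; linear_combination -hd + h2
    · push Not at hv
      have hb : g.1 0 1 = 0 := congrArg Prod.fst hv
      have ha : 1 - g.1 0 0 = 0 := congrArg Prod.snd hv
      refine ⟨(0, 1), by simp, ?_⟩
      simp only [ac]
      ext
      · simp [hb]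
      · simp; linear_combination h2 + ha
  obtain ⟨v, hv, hf⟩ := this
  obtain ⟨t, rfl⟩ := nn_of_fix hv hf
  refine ⟨v, t, hv, ?_, rfl⟩
  rintro rfl
  exact h1 (nn_zero v)

lemma nn_conj (s : SLF F) (v : F × F) (t : F) : s * nn v t * s⁻¹ = nn (ac s v) t := by
  rw [mul_inv_eq_iff_eq_mul]
  have hd := dt s
  apply sl_ext <;>
  simp only [Matrix.SpecialLinearGroup.coe_mul, Matrix.mul_apply, Fin.sum_univ_two, nn00, nn01, nn10, nn11, ac]
  · linear_combination (t * v.2 * (s.1 0 0 * v.1 + s.1 0 1 * v.2)) * hd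
  · linear_combination (-t * v.1 * (s.1 0 0 * v.1 + s.1 0 1 * v.2)) * hd
  · linear_combination (t * v.2 * (s.1 1 0 * v.1 + s.1 1 1 * v.2)) * hd
  · linear_combination (-t * v.1 * (s.1 1 0 * v.1 + s.1 1 1 * v.2)) * hd

lemma nn_inj {v w : F × F} {t : F} (ht : t ≠ 0) (h : nn v t = nn w t) : w = v ∨ w = -v := by
  have h1 : t * v.1 ^ 2 = t * w.1 ^ 2 := by rw [← nn01, h, nn01]
  have h2 : -(t * v.2 ^ 2) = -(t * w.2 ^ 2) := by rw [← nn10, h, nn10]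
  have h3 : 1 + t * v.1 * v.2 = 1 + t * w.1 * w.2 := by rw [← nn11, h, nn11]
  have e1 : v.1 ^ 2 = w.1 ^ 2 := mul_left_cancel₀ ht h1
  have e2 : v.2 ^ 2 = w.2 ^ 2 := mul_left_cancel₀ ht (neg_injective h2)
  have e3 : v.1 * v.2 = w.1 * w.2 := mul_left_cancel₀ ht (by linear_combination h3)
  clear h
  obtain ⟨a, b⟩ := v
  obtain ⟨c, d⟩ := w
  simp only [Prod.mk.injEq, Prod.neg_mk] at *
  rcases sq_eq_sq_iff_eq_or_eq_neg.1 e1 with h | h <;> rcases sq_eq_sq_iff_eq_or_eq_neg.1 e2 with h' | h'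
  · left; exact ⟨h.symm, h'.symm⟩
  · by_cases hc : c = 0
    · right; subst hc; simp [h, h']
    · by_cases hd : d = 0
      · left; subst hd; simp [h, h']
      · have : c * d = - (c * d) := by rw [h, h'] at e3; linear_combination -e3
        have h4 : c * d ≠ 0 := mul_ne_zero hc hd
        have h6 : c * (d + d) = 0 := by linear_combination this
        have h7 : d = -d := by
          have := (mul_eq_zero.1 h6).resolve_left hc
          linear_combination this
        left; exact ⟨h.symm, by rw [h']; exact h7⟩
  · by_cases hc : c = 0
    · left; subst hc; simp [h, h']
    · by_cases hd : d = 0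
      · right; subst hd; simp [h, h']
      · have h6 : c * (d + d) = 0 := by rw [h, h'] at e3; linear_combination -e3
        have h7 : d = -d := by
          have := (mul_eq_zero.1 h6).resolve_left hc
          linear_combination this
        right; exact ⟨by rw [h]; simp, by rw [h']; exact h7⟩
  · right; exact ⟨by rw [h]; simp, by rw [h']; simp⟩

/-- cross product -/
def cr (v w : F × F) : F := v.1 * w.2 - v.2 * w.1

lemma nn_parallel {v w : F × F} {t : F} (hw : ac (nn w t) v = v) (ht : t ≠ 0) (hw0 : w ≠ 0) : cr v w = 0 := by
  have h1 := congrArg Prod.fst hw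
  have h2 := congrArg Prod.snd hw
  simp only [ac, nn00, nn01, nn10, nn11] at h1 h2
  by_contra hc
  apply hw0
  have e1 : t * cr v w * w.1 = 0 := by unfold cr; linear_combination -h1
  have e2 : t * cr v w * w.2 = 0 := by unfold cr; linear_combination -h2
  have hne : t * cr v w ≠ 0 := mul_ne_zero ht hc
  exact Prod.ext ((mul_eq_zero.1 e1).resolve_left hne) ((mul_eq_zero.1 e2).resolve_left hne)

lemma fix_of_cr {v w : F × F} (hc : cr v w = 0) (t : F) : ac (nn w t) v = v := by
  simp only [ac, nn00, nn01, nn10, nn11]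
  unfold cr at hc
  ext <;> simp
  · linear_combination -t * w.1 * hc
  · linear_combination -t * w.2 * hc

lemma par_fix {n1 n2 : SLF F} (h1 : n1 ∈ VV F) (h2 : n2 ∈ VV F) (h : tr2 (n1 * n2) = 2) {v : F × F}
    (hv : v ≠ 0) (hf : ac n2 v = v) : ac n1 v = v := by
  obtain ⟨w, t, hw, ht, rfl⟩ := exists_nn h1
  obtain ⟨s, rfl⟩ := nn_of_fix hv hf
  have hs : s ≠ 0 := by
    rintro rfl
    exact (mem_VV.1 h2).1 (nn_zero v)
  apply fix_of_cr
  rw [tr2_mul] at h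
  simp only [nn00, nn01, nn10, nn11] at h
  have : (t * s) * (cr v w) ^ 2 = 0 := by
    unfold cr; linear_combination -h
  have := (mul_eq_zero.1 this).resolve_left (mul_ne_zero ht hs)
  exact pow_eq_zero_iff (two_ne_zero) |>.1 this

lemma quad_roots (a b c : F) (h : a ≠ 0 ∨ b ≠ 0 ∨ c ≠ 0) :
    (univ.filter fun x : F => a + b * x + c * x ^ 2 = 0).card ≤ 2 := by
  by_contra hc
  push Not at hc
  obtain ⟨x, hx, y, hy, z, hz, hxy, hxz, hyz⟩ := Finset.two_lt_card.1 hc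
  simp only [mem_filter, mem_univ, true_and] at hx hy hz
  have e1 : b + c * (x + y) = 0 := by
    have : (x - y) * (b + c * (x + y)) = 0 := by linear_combination hx - hy
    exact (mul_eq_zero.1 this).resolve_left (sub_ne_zero.2 hxy)
  have e2 : b + c * (x + z) = 0 := by
    have : (x - z) * (b + c * (x + z)) = 0 := by linear_combination hx - hz
    exact (mul_eq_zero.1 this).resolve_left (sub_ne_zero.2 hxz)
  have e3 : c = 0 := by
    have : (y - z) * c = 0 := by linear_combination e1 - e2
    exact (mul_eq_zero.1 this).resolve_left (sub_ne_zero.2 hyz)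
  subst e3
  have e4 : b = 0 := by linear_combination e1
  subst e4
  have e5 : a = 0 := by linear_combination hx
  simp_all

lemma tr2_mul_inv (g n : SLF F) : tr2 (g * n⁻¹) =
    g.1 0 0 * n.1 1 1 - g.1 0 1 * n.1 1 0 - g.1 1 0 * n.1 0 1 + g.1 1 1 * n.1 0 0 := by
  rw [tr2_mul, Matrix.SpecialLinearGroup.coe_inv, Matrix.adjugate_fin_two]
  simp; ring

lemma fibre_le (h20 : (2 : F) ≠ 0) {g g' : SLF F} (hg : tr2 g ≠ 2) (hg' : tr2 g' ≠ 2) (hne : g ≠ g') :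
    ((VV F).filter fun n => tr2 (g * n⁻¹) = 2 ∧ tr2 (g' * n⁻¹) = 2).card ≤ 3 := by
  set τ := tr2 g - 2 with hτ
  set τ' := tr2 g' - 2 with hτ'
  have t0 : τ ≠ 0 := sub_ne_zero.2 hg
  have t0' : τ' ≠ 0 := sub_ne_zero.2 hg'
  set α := τ' * (g.1 0 0 - g.1 1 1) - τ * (g'.1 0 0 - g'.1 1 1) with hα
  set β := τ' * g.1 0 1 - τ * g'.1 0 1 with hβ
  set γ := τ' * g.1 1 0 - τ * g'.1 1 0 with hγ
  have hz : β ≠ 0 ∨ α ≠ 0 ∨ -γ ≠ 0 := by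
    by_contra hcon
    push Not at hcon
    obtain ⟨b0, a0, c0⟩ := hcon
    have c0 : γ = 0 := by simpa using c0
    apply hne
    have d1 := dt g
    have d2 := dt g'
    have q1 : (g.1 0 0 - g.1 1 1) ^ 2 + 4 * (g.1 0 1 * g.1 1 0) = τ * (τ + 4) := by
      rw [hτ]; unfold tr2; linear_combination (-4) * d1
    have q2 : (g'.1 0 0 - g'.1 1 1) ^ 2 + 4 * (g'.1 0 1 * g'.1 1 0) = τ' * (τ' + 4) := by
      rw [hτ']; unfold tr2; linear_combination (-4) * d2
    have q3 : τ' ^ 2 * (τ * (τ + 4)) = τ ^ 2 * (τ' * (τ' + 4)) := by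
      rw [← q1, ← q2]
      linear_combination (τ' * (g.1 0 0 - g.1 1 1) + τ * (g'.1 0 0 - g'.1 1 1)) * a0
        + 4 * (τ' * g.1 1 0) * b0 + 4 * (τ * g'.1 0 1) * c0
    have q4 : (τ * τ' * 2 * 2) * (τ' - τ) = 0 := by linear_combination q3
    have q5 : τ' = τ := by
      have := (mul_eq_zero.1 q4).resolve_left (by simp [t0, t0', h20])
      linear_combination this
    have e1 : g.1 0 0 - g.1 1 1 = g'.1 0 0 - g'.1 1 1 := by
      apply mul_left_cancel₀ t0
      rw [hα, q5] at a0; linear_combination a0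
    have e2 : g.1 0 1 = g'.1 0 1 := by
      apply mul_left_cancel₀ t0
      rw [hβ, q5] at b0; linear_combination b0
    have e3 : g.1 1 0 = g'.1 1 0 := by
      apply mul_left_cancel₀ t0
      rw [hγ, q5] at c0; linear_combination c0
    have e4 : g.1 0 0 + g.1 1 1 = g'.1 0 0 + g'.1 1 1 := by
      rw [hτ, hτ'] at q5; unfold tr2 at q5; linear_combination -q5
    apply sl_ext _ e2 e3 _
    · apply mul_left_cancel₀ h20; linear_combination e1 + e4
    · apply mul_left_cancel₀ h20; linear_combination e4 - e1
  set R : Finset F := univ.filter fun x : F => β + α * x + (-γ) * x ^ 2 = 0 with hR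
  have hRc : R.card ≤ 2 := quad_roots β α (-γ) hz
  have key : ∀ n ∈ (VV F).filter (fun n => tr2 (g * n⁻¹) = 2 ∧ tr2 (g' * n⁻¹) = 2),
      ∃ x y z : F, n.1 0 0 = 1 + x ∧ n.1 1 1 = 1 - x ∧ n.1 0 1 = y ∧ n.1 1 0 = z ∧ x ^ 2 + y * z = 0 ∧
        x * (g.1 0 0 - g.1 1 1) + g.1 0 1 * z + g.1 1 0 * y = τ ∧
        α * x + β * z + γ * y = 0 := by
    intro n hn
    obtain ⟨hV, h1, h2⟩ := mem_filter.1 hn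
    have hV2 := (mem_VV.1 hV).2
    have hd := dt n
    unfold tr2 at hV2
    rw [tr2_mul_inv] at h1 h2
    have i1 : n.1 1 1 = 1 - (n.1 0 0 - 1) := by linear_combination hV2
    have j1 : (n.1 0 0 - 1) * (g.1 0 0 - g.1 1 1) + g.1 0 1 * n.1 1 0 + g.1 1 0 * n.1 0 1 = τ := by
      rw [hτ]; rw [i1] at h1; unfold tr2; linear_combination -h1
    have j2 : (n.1 0 0 - 1) * (g'.1 0 0 - g'.1 1 1) + g'.1 0 1 * n.1 1 0 + g'.1 1 0 * n.1 0 1 = τ' := by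
      rw [hτ']; rw [i1] at h2; unfold tr2; linear_combination -h2
    refine ⟨n.1 0 0 - 1, n.1 0 1, n.1 1 0, by ring, i1, rfl, rfl, ?_, j1, ?_⟩
    · rw [i1] at hd; linear_combination -hd
    · rw [hα, hβ, hγ]; linear_combination τ' * j1 - τ * j2
  have hmap : ((VV F).filter fun n => tr2 (g * n⁻¹) = 2 ∧ tr2 (g' * n⁻¹) = 2).card ≤
      (insertNone R).card := by
    refine Finset.card_le_card_of_injOn
      (fun n => if n.1 1 0 = 0 then none else some ((n.1 0 0 - 1) / n.1 1 0)) ?_ ?_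
    · intro n hn
      obtain ⟨x, y, z, h1, h2, h3, h4, h5, h6, h7⟩ := key n hn
      simp only [h4, h1]
      by_cases z0 : z = 0
      · simp [z0]
      · simp only [z0, if_false, mem_coe, some_mem_insertNone, hR, mem_filter, mem_univ, true_and]
        field_simp
        have : z * (β * z ^ 2 + α * x * z - γ * x ^ 2) = 0 := by
          linear_combination z^2 * h7 - γ * z * h5
        have := (mul_eq_zero.1 this).resolve_left z0
        linear_combination this
    · intro n hn n' hn' he
      obtain ⟨x, y, z, h1, h2, h3, h4, h5, h6, h7⟩ := key n hn
      obtain ⟨x', y', z', h1', h2', h3', h4', h5', h6', h7'⟩ := key n' hn'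
      simp only [h4, h1, h4', h1'] at he
      have hxyz : x = x' ∧ y = y' ∧ z = z' := by
        by_cases z0 : z = 0 <;> by_cases z0' : z' = 0
        · subst z0; subst z0'
          have x0 : x = 0 := by simpa using h5
          have x0' : x' = 0 := by simpa using h5'
          subst x0; subst x0'
          refine ⟨rfl, ?_, rfl⟩
          have hg0 : g.1 1 0 ≠ 0 := by
            intro h0; rw [h0] at h6; apply t0; rw [← h6]; ring
          apply mul_left_cancel₀ hg0; linear_combination h6 - h6'
        · simp [z0, z0'] at he
        · simp [z0, z0'] at he
        · simp only [z0, z0', if_false, Option.some.injEq] at he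
          have e1 : x * z' = x' * z := by
            field_simp at he
            linear_combination he
          have e2 : y * z' = y' * z := by
            have : (z * z') * (y * z') = (z * z') * (y' * z) := by
              linear_combination z' ^ 2 * h5 - z ^ 2 * h5' - (x * z' + x' * z) * e1
            exact mul_left_cancel₀ (mul_ne_zero z0 z0') this
          have e3 : z = z' := by
            apply mul_left_cancel₀ t0
            linear_combination (-z) * h6' + z' * h6 - (g.1 0 0 - g.1 1 1) * e1 - g.1 1 0 * e2
          subst e3
          exact ⟨mul_right_cancel₀ z0 e1, mul_right_cancel₀ z0 e2, rfl⟩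
      obtain ⟨rfl, rfl, rfl⟩ := hxyz
      exact sl_ext (by rw [h1, h1']) (by rw [h3, h3']) (by rw [h4, h4']) (by rw [h2, h2'])
  rw [card_insertNone] at hmap
  omega

end PartB

open Finset

section PartB2
set_option linter.unusedSectionVars false
open scoped Pointwise
variable {F : Type*} [Field F] [Fintype F] [DecidableEq F]

lemma nondeg (h20 : (2 : F) ≠ 0) (W : Finset (SLF F)) (hW : W ⊆ VV F)
    (h : ∀ n2 ∈ W, 2 * (W.filter fun n1 => tr2 (n1 * n2) = 2).card ≤ W.card) :
    W.card ^ 3 ≤ 16 * (W * W).card ^ 2 := by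
  classical
  rcases W.eq_empty_or_nonempty with rfl | hne
  · simp
  have hWW : W.card ≤ (W * W).card := Finset.card_le_card_mul_left hne
  set gd : SLF F → Finset (SLF F) := fun n2 => W.filter fun n1 => ¬ tr2 (n1 * n2) = 2 with hgd
  have hg : ∀ n2 ∈ W, W.card ≤ 2 * (gd n2).card := by
    intro n2 h2
    have := h n2 h2
    have e := Finset.card_filter_add_card_filter_not (s := W) (fun n1 => tr2 (n1 * n2) = 2)
    simp only [hgd]; omega
  set Q : Finset (Σ _ : SLF F, SLF F × SLF F) := W.sigma (fun n2 => gd n2 ×ˢ gd n2) with hQ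
  have hQc : W.card ^ 3 ≤ 4 * Q.card := by
    rw [hQ, Finset.card_sigma, Finset.mul_sum]
    calc W.card ^ 3 = ∑ n2 ∈ W, W.card ^ 2 := by rw [Finset.sum_const, smul_eq_mul]; ring
      _ ≤ _ := by
        apply Finset.sum_le_sum
        intro n2 h2
        rw [Finset.card_product]
        have := hg n2 h2
        nlinarith
  have hbad : (Q.filter fun q => q.2.1 * q.1 = q.1 * q.2.2).card ≤ W.card ^ 2 := by
    rw [sq, ← Finset.card_product]
    apply Finset.card_le_card_of_injOn (fun q => (q.1, q.2.1))
    · rintro ⟨a, b, c⟩ hq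
      simp only [hQ, hgd, mem_coe, mem_filter, mem_sigma, mem_product] at hq ⊢
      tauto
    · rintro ⟨a, b, c⟩ hq ⟨a', b', c'⟩ hq' he
      simp only [Prod.mk.injEq] at he
      obtain ⟨rfl, rfl⟩ := he
      have h1 := (mem_filter.1 hq).2
      have h2 := (mem_filter.1 hq').2
      simp only at h1 h2
      rw [h1] at h2
      have := mul_left_cancel h2
      subst this; rfl
  have hgood : (Q.filter fun q => ¬ q.2.1 * q.1 = q.1 * q.2.2).card ≤ 3 * ((W * W) ×ˢ (W * W)).card := by
    apply Finset.card_le_mul_card_image_of_maps_to (f := fun q => (q.2.1 * q.1, q.1 * q.2.2))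
    · rintro ⟨a, b, c⟩ hq
      simp only [hQ, hgd, mem_filter, mem_sigma, mem_product] at hq ⊢
      exact ⟨mul_mem_mul hq.1.2.1.1 hq.1.1, mul_mem_mul hq.1.1 hq.1.2.2.1⟩
    · rintro ⟨g, g'⟩ -
      by_cases hc : tr2 g ≠ 2 ∧ tr2 g' ≠ 2 ∧ g ≠ g'
      · refine le_trans ?_ (fibre_le h20 hc.1 hc.2.1 hc.2.2)
        apply Finset.card_le_card_of_injOn (fun q => q.1)
        · rintro ⟨a, b, c⟩ hq
          simp only [hQ, hgd, mem_coe, mem_filter, mem_sigma, mem_product, Prod.mk.injEq] at hq ⊢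
          obtain ⟨⟨⟨ha, ⟨hb, hb'⟩, hc1, hc'⟩, hn⟩, rfl, rfl⟩ := hq
          refine ⟨hW ha, ?_, ?_⟩
          · rw [mul_inv_cancel_right]; exact (mem_VV.1 (hW hb)).2
          · rw [tr2_comm, inv_mul_cancel_left]; exact (mem_VV.1 (hW hc1)).2
        · rintro ⟨a, b, c⟩ hq ⟨a', b', c'⟩ hq' he
          simp only at he
          subst he
          have h1 := (mem_filter.1 hq).2
          have h2 := (mem_filter.1 hq').2
          rw [← h2] at h1
          simp only [Prod.mk.injEq] at h1
          have e1 := mul_right_cancel h1.1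
          have e2 := mul_left_cancel h1.2
          subst e1; subst e2; rfl
      · rw [Finset.card_eq_zero.2]; · simp
        apply Finset.eq_empty_of_forall_notMem
        rintro ⟨a, b, c⟩ hq
        simp only [hQ, hgd, mem_filter, mem_sigma, mem_product, Prod.mk.injEq] at hq
        obtain ⟨⟨⟨ha, ⟨hb, hb'⟩, hc1, hc'⟩, hn⟩, rfl, rfl⟩ := hq
        exact hc ⟨hb', by rwa [tr2_comm], hn⟩
  have e := Finset.card_filter_add_card_filter_not (s := Q) (fun q => q.2.1 * q.1 = q.1 * q.2.2)
  rw [Finset.card_product] at hgood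
  nlinarith

lemma pw_mono {G : Type*} [Group G] [DecidableEq G] {S : Finset G} (h1 : (1 : G) ∈ S) {m n : ℕ} (h : m ≤ n) :
    S ^ m ⊆ S ^ n := Finset.pow_subset_pow_right h1 h

def stb (T : Finset (SLF F)) (v : F × F) : Finset (SLF F) := T.filter fun g => ac g v = v

lemma mem_stb {T : Finset (SLF F)} {v : F × F} {g : SLF F} : g ∈ stb T v ↔ g ∈ T ∧ ac g v = v := by
  simp [stb]

lemma cr_smul_of {v w : F × F} (hv : v ≠ 0) (h : cr v w = 0) : ∃ c, w = (c * v.1, c * v.2) := by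
  unfold cr at h
  by_cases hx : v.1 = 0
  · have hy : v.2 ≠ 0 := fun hy => hv (Prod.ext hx hy)
    refine ⟨w.2 / v.2, ?_⟩
    have : w.1 = 0 := by
      have : v.2 * w.1 = 0 := by rw [hx] at h; linear_combination -h
      exact (mul_eq_zero.1 this).resolve_left hy
    ext
    · simp [hx, this]
    · simp; field_simp
  · refine ⟨w.1 / v.1, ?_⟩
    ext
    · simp; field_simp
    · simp; field_simp; linear_combination h

lemma stab_inter {g : SLF F} {v w : F × F} (h1 : ac g v = v) (h2 : ac g w = w) (hv : v ≠ 0) (hc : cr v w ≠ 0) :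
    g = 1 := by
  obtain ⟨t, rfl⟩ := nn_of_fix hv h1
  by_cases ht : t = 0
  · rw [ht, nn_zero]
  · have := nn_parallel h2 ht hv
    exfalso; apply hc; unfold cr at *; linear_combination -this

/-- moved vectors: transvections moving direction -/
lemma move {n : SLF F} {v w : F × F} (hn : n ≠ 1) (hw : w ≠ 0) (hf : ac n w = w) (hc : cr w v ≠ 0) :
    cr v (ac n v) ≠ 0 := by
  obtain ⟨t, rfl⟩ := nn_of_fix hw hf
  have ht : t ≠ 0 := by rintro rfl; exact hn (nn_zero w)
  have : cr v (ac (nn w t) v) = -t * (cr w v) ^ 2 := by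
    simp only [cr, ac, nn00, nn01, nn10, nn11]; ring
  rw [this]
  exact mul_ne_zero (neg_ne_zero.2 ht) (pow_ne_zero _ hc)

lemma stab_sq {S : Finset (SLF F)} {n : SLF F} {v : F × F} (hv : v ≠ 0) (hn : n ∈ S ^ 4) 
    (hc : cr v (ac n v) ≠ 0) : (stb (S ^ 8) v).card ^ 2 ≤ (S ^ 20).card := by
  rw [sq, ← Finset.card_product]
  apply Finset.card_le_card_of_injOn (fun q => q.1 * n * q.2)
  · rintro ⟨x, y⟩ hq
    simp only [mem_coe, mem_product, mem_stb] at hq ⊢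
    have : S ^ 20 = S ^ 8 * S ^ 4 * S ^ 8 := by rw [← pow_add, ← pow_add]
    rw [this]
    exact mul_mem_mul (mul_mem_mul hq.1.1 hn) hq.2.1
  · rintro ⟨x, y⟩ hq ⟨x', y'⟩ hq' he
    simp only [mem_coe, mem_product, mem_stb] at hq hq' he
    have e1 : x'⁻¹ * x = n * (y' * y⁻¹) * n⁻¹ := by
      have : x * n * y = x' * n * y' := he
      have h2 : x = x' * n * y' * y⁻¹ * n⁻¹ := by rw [← this]; group
      rw [h2]; group
    have f1 : ac (x'⁻¹ * x) v = v := by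
      rw [ac_mul, hq.1.2, ac_inv_of hq'.1.2]
    have f2 : ac (x'⁻¹ * x) (ac n v) = ac n v := by
      rw [e1, ← ac_mul, inv_mul_cancel_right, ac_mul, ac_mul, ac_inv_of hq.2.2, hq'.2.2]
    have := stab_inter f1 f2 hv hc
    have hx : x = x' := by rw [inv_mul_eq_one] at this; exact this.symm
    subst hx
    have hy : y = y' := by simpa using he
    subst hy; rfl

end PartB2

open Finset

section PartB3
set_option linter.unusedSectionVars false
open scoped Pointwise
variable {F : Type*} [Field F] [Fintype F] [DecidableEq F]

lemma W_bound (h20 : (2 : F) ≠ 0) {S : Finset (SLF F)} (h1 : 1 ∈ S)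
    {u u' : SLF F} {v' : F × F} (hu : u ∈ S ^ 4) (hu1 : u ≠ 1) (hue : ac u (1, 0) = (1, 0))
    (hu' : u' ∈ S ^ 4) (hu1' : u' ≠ 1) (hv' : v' ≠ 0) (hue' : ac u' v' = v') (hcr : cr (1, 0) v' ≠ 0) :
    (S ^ 8 ∩ VV F).card ^ 3 ≤ 16 * (S ^ 20).card ^ 2 := by
  classical
  set W := S ^ 8 ∩ VV F with hW
  by_cases h : ∀ n2 ∈ W, 2 * (W.filter fun n1 => tr2 (n1 * n2) = 2).card ≤ W.card
  · refine (nondeg h20 W inter_subset_right h).trans ?_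
    have : W * W ⊆ S ^ 20 := by
      refine (mul_subset_mul inter_subset_left inter_subset_left).trans ?_
      rw [← pow_add]; exact pw_mono h1 (by norm_num)
    have := card_le_card this
    gcongr
  · push Not at h
    obtain ⟨n2, hn2, hlt⟩ := h
    obtain ⟨v, t, hv, ht, hnn⟩ := exists_nn (mem_inter.1 hn2).2
    have hfix : ac n2 v = v := by rw [hnn]; exact nn_fix v t
    have hsub : (W.filter fun n1 => tr2 (n1 * n2) = 2) ⊆ stb (S ^ 8) v := by
      intro n1 hn1
      obtain ⟨ha, hb⟩ := mem_filter.1 hn1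
      rw [mem_stb]
      exact ⟨(mem_inter.1 ha).1, par_fix (mem_inter.1 ha).2 (mem_inter.1 hn2).2 hb hv hfix⟩
    have hr : (stb (S ^ 8) v).card ^ 2 ≤ (S ^ 20).card := by
      by_cases hc : cr (1, 0) v = 0
      · apply stab_sq hv hu'
        apply move hu1' hv' hue'
        obtain ⟨c, rfl⟩ := cr_smul_of (by simp) hc
        unfold cr at *
        simp only at *
        have hc0 : c ≠ 0 := by rintro rfl; apply hv; simp
        have : v'.2 ≠ 0 := by intro h; apply hcr; rw [h]; ring
        intro h
        have : v'.2 * c = 0 := by linear_combination -h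
        simp_all
      · exact stab_sq hv hu (move hu1 (by simp) hue hc)
    have h3 := card_le_card hsub
    set r := (stb (S ^ 8) v).card
    have h4 : W.card ≤ 2 * r := by omega
    calc W.card ^ 3 ≤ (2 * r) ^ 3 := by gcongr
      _ = 8 * r ^ 3 := by ring
      _ ≤ 16 * (r ^ 2) ^ 2 := by
        rcases Nat.eq_zero_or_pos r with h0 | h0
        · simp [h0]
        · nlinarith [pow_pos h0 3]
      _ ≤ _ := by gcongr

lemma orbit {S : Finset (SLF F)} (hS : S⁻¹ = S) {g : SLF F} {w : F × F} (hg : g ∈ S ^ 6) (hg1 : g ≠ 1)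
    (hw : w ≠ 0) (hf : ac g w = w) :
    S.card ≤ 2 * (S ^ 8 ∩ VV F).card * (stb (S ^ 2) w).card := by
  classical
  obtain ⟨t, rfl⟩ := nn_of_fix hw hf
  have ht : t ≠ 0 := by rintro rfl; exact hg1 (nn_zero w)
  have hinv : ∀ s ∈ S, s⁻¹ ∈ S := fun s hs => by rw [← hS]; simpa using hs
  have a1 : S.card ≤ (stb (S ^ 2) w).card * (S.image fun s => ac s w).card := by
    apply Finset.card_le_mul_card_image
    intro o ho
    obtain ⟨s0, hs0, rfl⟩ := mem_image.1 ho
    apply Finset.card_le_card_of_injOn (fun s => s0⁻¹ * s)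
    · intro s hs
      simp only [mem_coe, mem_filter] at hs
      simp only [mem_coe, mem_stb]
      refine ⟨?_, ?_⟩
      · rw [sq]; exact mul_mem_mul (hinv _ hs0) hs.1
      · rw [ac_mul, hs.2]; exact ac_inv_of rfl
    · intro a _ b _ h
      exact mul_left_cancel h
  have a2 : (S.image fun s => ac s w).card ≤ 2 * (S ^ 8 ∩ VV F).card := by
    apply Finset.card_le_mul_card_image_of_maps_to (f := fun o => nn o t)
    · intro o ho
      obtain ⟨s, hs, rfl⟩ := mem_image.1 ho
      simp only [mem_inter]
      refine ⟨?_, nn_mem (ac_ne_zero s hw) ht⟩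
      rw [← nn_conj]
      have : S ^ 8 = S * S ^ 6 * S := by rw [← pow_succ', ← pow_succ]
      rw [this]
      exact mul_mem_mul (mul_mem_mul hs hg) (hinv s hs)
    · intro n _
      rcases Finset.eq_empty_or_nonempty ({a ∈ S.image fun s => ac s w | nn a t = n}) with h | ⟨o, ho⟩
      · rw [h]; simp
      · refine (card_le_card (t := {o, -o}) ?_).trans Finset.card_le_two
        intro o' ho'
        have e1 := (mem_filter.1 ho).2
        have e2 := (mem_filter.1 ho').2
        have := nn_inj ht (e1.trans e2.symm)
        simpa using this
  calc _ ≤ _ := a1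
    _ ≤ (stb (S ^ 2) w).card * (2 * (S ^ 8 ∩ VV F).card) := by gcongr
    _ = _ := by ring

def Iv (S : Finset (SLF F)) (v : F × F) : Prop := v ≠ 0 ∧ ∃ g ∈ S ^ 4, g ≠ 1 ∧ ac g v = v

lemma Iv_S {S : Finset (SLF F)} (hS : S⁻¹ = S) (h1 : 1 ∈ S) (hlt : 2 * (S ^ 8 ∩ VV F).card < S.card)
    {v : F × F} (hv : Iv S v) {s : SLF F} (hs : s ∈ S) : Iv S (ac s v) := by
  classical
  obtain ⟨hv0, g, hg, hg1, hgv⟩ := hv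
  refine ⟨ac_ne_zero s hv0, ?_⟩
  have := orbit hS (g := s * g * s⁻¹) (w := ac s v) ?_ ?_ (ac_ne_zero s hv0) ?_
  · have h2 : 1 < (stb (S ^ 2) (ac s v)).card := by
      by_contra hc
      push Not at hc
      nlinarith
    obtain ⟨g, hg, hne⟩ := Finset.exists_mem_ne h2 1
    rw [mem_stb] at hg
    exact ⟨g, pw_mono h1 (by norm_num) hg.1, hne, hg.2⟩
  · have : S ^ 6 = S * S ^ 4 * S := by rw [← pow_succ', ← pow_succ]
    rw [this]
    exact mul_mem_mul (mul_mem_mul hs hg) (by rw [← hS]; simpa using hs)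
  · intro h
    apply hg1
    rwa [mul_inv_eq_one, mul_eq_left] at h
  · rw [← ac_mul, inv_mul_cancel_right, ac_mul, hgv]

lemma Iv_pow {S : Finset (SLF F)} (hS : S⁻¹ = S) (h1 : 1 ∈ S) (hlt : 2 * (S ^ 8 ∩ VV F).card < S.card) (n : ℕ) :
    ∀ {v : F × F} (_ : Iv S v) {s : SLF F} (_ : s ∈ S ^ n), Iv S (ac s v) := by
  induction n with
  | zero => intro v hv s hs; simp at hs; subst hs; rwa [ac_one]
  | succ n ih =>
    intro v hv s hs
    rw [pow_succ, mem_mul] at hs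
    obtain ⟨a, ha, b, hb, rfl⟩ := hs
    rw [ac_mul]
    exact ih (Iv_S hS h1 hlt hv hb) ha

lemma Iv_smul {S : Finset (SLF F)} {v : F × F} (hv : Iv S v) {c : F} (hc : c ≠ 0) : Iv S (c * v.1, c * v.2) := by
  obtain ⟨hv0, g, hg, hg1, hgv⟩ := hv
  refine ⟨?_, g, hg, hg1, ?_⟩
  · intro h
    apply hv0
    have e1 := congrArg Prod.fst h
    have e2 := congrArg Prod.snd h
    simp [hc] at e1 e2
    exact Prod.ext e1 e2
  · rw [ac_smul, hgv]

lemma nn_pow_ac (w v : F × F) (t : F) (k : ℕ) :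
    ac ((nn w t) ^ k) v = (v.1 - k * (t * cr v w * w.1), v.2 - k * (t * cr v w * w.2)) := by
  induction k with
  | zero => simp [ac_one]
  | succ n ih =>
    rw [pow_succ', ac_mul, ih]
    simp only [ac, nn00, nn01, nn10, nn11, cr]
    push_cast
    ext <;> simp <;> ring

end PartB3

section PartB4
open scoped Pointwise
variable {p : ℕ} [Fact p.Prime]

lemma Iv_all {S : Finset (SLF (ZMod p))} (hS : S⁻¹ = S) (h1 : 1 ∈ S)
    (hlt : 2 * (S ^ 8 ∩ VV (ZMod p)).card < S.card)
    {u u' : SLF (ZMod p)} {v' : ZMod p × ZMod p} (hu : u ∈ S ^ 4) (hu1 : u ≠ 1) (hue : ac u (1, 0) = (1, 0))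
    (hu' : u' ∈ S ^ 4) (hu1' : u' ≠ 1) (hv' : v' ≠ 0) (hue' : ac u' v' = v') (hcr : cr (1, 0) v' ≠ 0)
    {v : ZMod p × ZMod p} (hv : v ≠ 0) : Iv S v := by
  obtain ⟨t, hnn⟩ := nn_of_fix hv' hue'
  have ht : t ≠ 0 := by rintro rfl; exact hu1' (hnn.trans (nn_zero v'))
  by_cases hc : cr v v' = 0
  · refine ⟨hv, u', hu', hu1', ?_⟩
    rw [hnn]; exact fix_of_cr hc t
  · have hI : Iv S ((1, 0) : ZMod p × ZMod p) := ⟨by simp, u, hu, hu1, hue⟩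
    have h2 : v'.2 ≠ 0 := by
      intro h; apply hcr; unfold cr; simp [h]
    set α := cr v v' / v'.2 with hα
    have hα0 : α ≠ 0 := div_ne_zero hc h2
    -- v = α ((1,0) + x v')
    set y : ZMod p := -v.2 / (α * t * v'.2 * v'.2) with hy
    have hIk : Iv S (ac (u' ^ y.val) (1, 0)) := by
      have : u' ^ y.val ∈ S ^ (4 * y.val) := by rw [pow_mul]; exact Finset.pow_mem_pow hu'
      exact Iv_pow hS h1 hlt _ hI this
    have := Iv_smul hIk hα0
    convert this using 1
    rw [hnn, nn_pow_ac, ZMod.natCast_zmod_val]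
    have e : cr ((1, 0) : ZMod p × ZMod p) v' = v'.2 := by simp [cr]
    rw [e]
    have hyy : α * y * t * v'.2 * v'.2 = -v.2 := by rw [hy]; field_simp
    have hαα : α * v'.2 = v.1 * v'.2 - v.2 * v'.1 := by rw [hα]; unfold cr; field_simp
    ext
    · simp only
      apply mul_right_cancel₀ h2
      linear_combination -hαα + v'.1 * hyy
    · simp only
      linear_combination hyy

set_option maxHeartbeats 1000000 in
theorem pivot (hp2 : p ≠ 2) {S : Finset (SLF (ZMod p))} (hS : S⁻¹ = S) (h1 : 1 ∈ S)
    {L : ℝ} (hL : 1 ≤ L) (hSL : ((S ^ 20).card : ℝ) ≤ L * S.card) (hSc : 1024 * L ^ 2 ≤ S.card)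
    {u u' : SLF (ZMod p)} {v' : ZMod p × ZMod p} (hu : u ∈ S ^ 4) (hu1 : u ≠ 1) (hue : ac u (1, 0) = (1, 0))
    (hu' : u' ∈ S ^ 4) (hu1' : u' ≠ 1) (hv' : v' ≠ 0) (hue' : ac u' v' = v') (hcr : cr (1, 0) v' ≠ 0) :
    (p : ℝ) ^ 3 ≤ 16384 * L ^ 4 * S.card := by
  classical
  have h20 : (2 : ZMod p) ≠ 0 := by
    have : NeZero p := ⟨(Fact.out : p.Prime).ne_zero⟩
    intro h
    have : ((2 : ℕ) : ZMod p) = 0 := by exact_mod_cast h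
    rw [ZMod.natCast_eq_zero_iff] at this
    exact hp2 ((Nat.prime_dvd_prime_iff_eq Fact.out Nat.prime_two).1 this)
  have hWb := W_bound h20 h1 hu hu1 hue hu' hu1' hv' hue' hcr
  set W := S ^ 8 ∩ VV (ZMod p) with hW
  have hWb' : (W.card : ℝ) ^ 3 ≤ 16 * L ^ 2 * (S.card : ℝ) ^ 2 := by
    have : (W.card : ℝ) ^ 3 ≤ 16 * ((S ^ 20).card : ℝ) ^ 2 := by exact_mod_cast hWb
    have h2 : ((S ^ 20).card : ℝ) ^ 2 ≤ (L * S.card) ^ 2 := by gcongr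
    calc _ ≤ _ := this
      _ ≤ 16 * (L * S.card) ^ 2 := by gcongr
      _ = _ := by ring
  have hs0 : (0 : ℝ) < S.card := lt_of_lt_of_le (by positivity) hSc
  have h4 : (4 * W.card : ℝ) ≤ S.card := by
    by_contra hc
    push Not at hc
    have : (S.card : ℝ) ^ 3 < (4 * W.card : ℝ) ^ 3 := by gcongr
    have h3 : 1024 * L ^ 2 * (S.card : ℝ) ^ 2 ≤ S.card * (S.card : ℝ) ^ 2 := by gcongr
    nlinarith
  have h4n : 4 * W.card ≤ S.card := by exact_mod_cast h4
  have hspos : 0 < S.card := by exact_mod_cast hs0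
  have hlt : 2 * W.card < S.card := by omega
  have hx : ∀ x : ZMod p, S.card ≤ 4 * W.card * ((stb (S ^ 2) (x, 1)).erase 1).card := by
    intro x
    obtain ⟨h0, g, hg, hg1, hgv⟩ := Iv_all hS h1 hlt hu hu1 hue hu' hu1' hv' hue' hcr (v := (x, 1)) (by simp)
    have ho := orbit hS (pw_mono h1 (by norm_num) hg) hg1 h0 hgv
    rw [← hW] at ho
    have hm1 : 1 ∈ stb (S ^ 2) (x, 1) := by
      rw [mem_stb]; exact ⟨Finset.one_mem_pow h1, ac_one _⟩
    rw [Finset.card_erase_of_mem hm1]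
    set m := (stb (S ^ 2) (x, 1)).card
    have hm : 2 ≤ m := by
      by_contra hc
      have : m ≤ 1 := by omega
      nlinarith
    obtain ⟨m', hm'⟩ : ∃ m', m = m' + 2 := ⟨m - 2, by omega⟩
    rw [hm'] at ho ⊢
    have e : m' + 2 - 1 = m' + 1 := rfl
    rw [e]
    nlinarith [Nat.zero_le (W.card * m')]
  have hsum : ∑ x : ZMod p, ((stb (S ^ 2) (x, 1)).erase 1).card ≤ W.card := by
    rw [← Finset.card_biUnion]
    · apply card_le_card
      intro g hg
      simp only [mem_biUnion, mem_univ, true_and, mem_erase, mem_stb] at hg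
      obtain ⟨x, hg1, hg2, hg3⟩ := hg
      rw [hW, mem_inter]
      refine ⟨pw_mono h1 (by norm_num) hg2, ?_⟩
      obtain ⟨t, rfl⟩ := nn_of_fix (by simp) hg3
      apply nn_mem (by simp)
      rintro rfl
      exact hg1 (nn_zero _)
    · intro x _ y _ hxy
      rw [Function.onFun, Finset.disjoint_left]
      intro g hg hg'
      simp only [mem_erase, mem_stb] at hg hg'
      apply hg.1
      refine stab_inter hg.2.2 hg'.2.2 (by simp) ?_
      simp [cr]; exact sub_ne_zero.2 hxy
  have hfin : p * S.card ≤ 4 * W.card ^ 2 := by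
    calc p * S.card = ∑ x : ZMod p, S.card := by simp [ZMod.card]
      _ ≤ ∑ x : ZMod p, 4 * W.card * ((stb (S ^ 2) (x, 1)).erase 1).card := Finset.sum_le_sum fun x _ => hx x
      _ = 4 * W.card * ∑ x : ZMod p, ((stb (S ^ 2) (x, 1)).erase 1).card := by rw [Finset.mul_sum]
      _ ≤ 4 * W.card * W.card := by gcongr
      _ = _ := by ring
  have hfin' : (p : ℝ) * S.card ≤ 4 * (W.card : ℝ) ^ 2 := by exact_mod_cast hfin
  have : ((p : ℝ) * S.card) ^ 3 ≤ 64 * (16 * L ^ 2 * (S.card : ℝ) ^ 2) ^ 2 := by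
    calc _ ≤ (4 * (W.card : ℝ) ^ 2) ^ 3 := by gcongr
      _ = 64 * ((W.card : ℝ) ^ 3) ^ 2 := by ring
      _ ≤ _ := by gcongr
  have h5 : (p : ℝ) ^ 3 * (S.card : ℝ) ^ 3 ≤ (16384 * L ^ 4 * S.card) * (S.card : ℝ) ^ 3 := by
    calc _ = ((p : ℝ) * S.card) ^ 3 := by ring
      _ ≤ _ := this
      _ = _ := by ring
  exact le_of_mul_le_mul_right h5 (by positivity)

end PartB4

open Finset

section PartC
set_option linter.unusedSectionVars false
variable {G X : Type*} [Group G] [Fintype G] [DecidableEq G] [Fintype X] [DecidableEq X] [MulAction G X]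

lemma sum_smul (g : G) (φ : X → ℝ) : ∑ x, φ (g • x) = ∑ x, φ x :=
  Equiv.sum_comp (MulAction.toPerm g) φ

theorem two_trans (hT1 : ∀ x y : X, ∃ g : G, g • x = y)
    (hT : ∀ x y x' y' : X, x ≠ y → x' ≠ y' → ∃ g : G, g • x = x' ∧ g • y = y')
    (hn : 2 ≤ Fintype.card X) (f : X → ℝ) (hf : ∑ x, f x = 0) :
    (∑ g : G, (∑ x, f x * f (g • x)) ^ 2) * ((Fintype.card X : ℝ) - 1) = Fintype.card G * (∑ x, f x ^ 2) ^ 2 := by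
  set P : X → X → ℝ := fun x y => ∑ g : G, f (g • x) * f (g • y) with hP
  have hinv : ∀ (h : G) x y, P (h • x) (h • y) = P x y := by
    intro h x y
    simp only [hP, ← mul_smul]
    exact Equiv.sum_comp (Equiv.mulRight h) (fun g => f (g • x) * f (g • y))
  obtain ⟨a, b, hab⟩ := Fintype.exists_pair_of_one_lt_card (show 1 < Fintype.card X by omega)
  set d := P a a with hd
  set c := P a b with hc
  have hPd : ∀ x, P x x = d := by
    intro x
    obtain ⟨g, rfl⟩ := hT1 a x
    exact hinv g a a
  have hPc : ∀ x y, x ≠ y → P x y = c := by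
    intro x y hxy
    obtain ⟨g, rfl, rfl⟩ := hT a b x y hab hxy
    exact hinv g a b
  have hPe : ∀ x y, P x y = c + if x = y then d - c else 0 := by
    intro x y
    split_ifs with h
    · subst h; rw [hPd]; ring
    · rw [hPc x y h]; ring
  have e1 : d + ((Fintype.card X : ℝ) - 1) * c = 0 := by
    have : ∑ y, P a y = 0 := by
      simp only [hP]
      rw [Finset.sum_comm]
      apply Finset.sum_eq_zero
      intro g _
      rw [← Finset.mul_sum, sum_smul g f, hf, mul_zero]
    simp only [hPe, Finset.sum_add_distrib, Finset.sum_const, Finset.sum_ite_eq, Finset.mem_univ, if_true, Finset.card_univ, nsmul_eq_mul] at this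
    linarith
  have e2 : (Fintype.card X : ℝ) * d = Fintype.card G * ∑ x, f x ^ 2 := by
    have : ∑ x, P x x = Fintype.card G * ∑ x, f x ^ 2 := by
      simp only [hP]
      rw [Finset.sum_comm]
      have : ∀ g : G, ∑ x : X, f (g • x) * f (g • x) = ∑ x, f x ^ 2 := by
        intro g
        rw [sum_smul g (fun x => f x * f x)]; simp only [sq]
      simp only [this, Finset.sum_const, Finset.card_univ, nsmul_eq_mul]
    rw [← this]; simp only [hPd, Finset.sum_const, Finset.card_univ, nsmul_eq_mul]
  have e3 : ∑ g : G, (∑ x, f x * f (g • x)) ^ 2 = (d - c) * ∑ x, f x ^ 2 := by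
    have : ∀ g : G, (∑ x, f x * f (g • x)) ^ 2 = ∑ x, ∑ y, (f x * f y) * (f (g • x) * f (g • y)) := by
      intro g
      rw [sq, Finset.sum_mul_sum]
      apply Finset.sum_congr rfl; intro x _
      apply Finset.sum_congr rfl; intro y _
      ring
    simp only [this]
    rw [Finset.sum_comm]
    have : ∀ x, ∑ g : G, ∑ y, (f x * f y) * (f (g • x) * f (g • y)) = (d - c) * f x ^ 2 := by
      intro x
      rw [Finset.sum_comm]
      simp only [← Finset.mul_sum]
      have : ∀ y, f x * f y * ∑ g : G, f (g • x) * f (g • y) = f x * f y * (c + if x = y then d - c else 0) := by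
        intro y; rw [← hPe]
      simp only [this, mul_add, Finset.sum_add_distrib, mul_ite, mul_zero, Finset.sum_ite_eq, Finset.mem_univ, if_true]
      rw [← Finset.sum_mul, ← Finset.mul_sum, hf]; ring
    simp only [this, ← Finset.mul_sum]
  rw [e3]
  linear_combination (∑ x, f x ^ 2) * e2 - (∑ x, f x ^ 2) * e1

/-- averaging operator -/
noncomputable def TT (m : G → ℝ) (f : X → ℝ) (x : X) : ℝ := ∑ g, m g * f (g⁻¹ • x)

noncomputable def II (m : G → ℝ) (f : X → ℝ) : ℝ := ∑ x, f x * TT m f x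

lemma TT_cv (m m' : G → ℝ) (f : X → ℝ) : TT (cv m m') f = TT m (TT m' f) := by
  funext x
  simp only [TT, cv]
  simp only [Finset.sum_mul, Finset.mul_sum]
  rw [Finset.sum_comm]
  apply Finset.sum_congr rfl; intro y _
  rw [← Equiv.sum_comp (Equiv.mulLeft y)]
  apply Finset.sum_congr rfl; intro g _
  simp only [Equiv.coe_mulLeft, inv_mul_cancel_left, mul_inv_rev, mul_smul]
  ring

lemma TT_adj (m : G → ℝ) (a b : X → ℝ) : ∑ x, a x * TT m b x = ∑ x, TT (fun g => m g⁻¹) a x * b x := by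
  simp only [TT, Finset.mul_sum, Finset.sum_mul]
  rw [Finset.sum_comm]
  conv_rhs => rw [Finset.sum_comm]
  rw [← Equiv.sum_comp (Equiv.inv G)]
  apply Finset.sum_congr rfl; intro g _
  rw [← sum_smul g⁻¹]
  apply Finset.sum_congr rfl; intro x _
  simp only [Equiv.inv_apply, inv_inv, smul_inv_smul]
  ring

lemma II_sq (m : G → ℝ) (f : X → ℝ) :
    (II m f) ^ 2 ≤ (∑ x, f x ^ 2) * II (cv m (fun g => m g⁻¹)) f := by
  have h1 : II m f = ∑ x, TT (fun g => m g⁻¹) f x * f x := TT_adj m f f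
  have h2 : II (cv m (fun g => m g⁻¹)) f = ∑ x, TT (fun g => m g⁻¹) f x ^ 2 := by
    unfold II
    rw [TT_cv, TT_adj]; simp only [sq]
  rw [h1, h2, mul_comm]
  exact Finset.sum_mul_sq_le_sq_mul_sq _ _ _

lemma II_le (hT1 : ∀ x y : X, ∃ g : G, g • x = y)
    (hT : ∀ x y x' y' : X, x ≠ y → x' ≠ y' → ∃ g : G, g • x = x' ∧ g • y = y')
    (hn : 2 ≤ Fintype.card X) (f : X → ℝ) (hf : ∑ x, f x = 0) (m : G → ℝ) :
    (II m f) ^ 2 * ((Fintype.card X : ℝ) - 1) ≤ (∑ g, m g ^ 2) * (Fintype.card G * (∑ x, f x ^ 2) ^ 2) := by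
  rw [← two_trans hT1 hT hn f hf, ← mul_assoc]
  have hn' : (0 : ℝ) ≤ (Fintype.card X : ℝ) - 1 := by
    have : (2 : ℝ) ≤ Fintype.card X := by exact_mod_cast hn
    linarith
  apply mul_le_mul_of_nonneg_right _ hn'
  have h1 : II m f = ∑ g : G, m g * ∑ x, f x * f (g⁻¹ • x) := by
    simp only [II, TT, Finset.mul_sum]
    rw [Finset.sum_comm]
    apply Finset.sum_congr rfl; intro y _
    apply Finset.sum_congr rfl; intro x _
    ring
  rw [h1]
  refine (Finset.sum_mul_sq_le_sq_mul_sq _ _ _).trans ?_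
  rw [← Equiv.sum_comp (Equiv.inv G) (fun g => (∑ x, f x * f (g • x)) ^ 2)]
  rfl

noncomputable def kk (κ : G → ℝ) : ℕ → G → ℝ
  | 0 => κ
  | j + 1 => cv (kk κ j) (kk κ j)

lemma kk_SP {κ : G → ℝ} (h : SP κ) (j : ℕ) : SP (kk κ j) := by
  induction j with
  | zero => exact h
  | succ j ih => exact ih.cv

lemma II_kk {κ : G → ℝ} (h : SP κ) (f : X → ℝ) (N : ℝ) (hN : ∑ x, f x ^ 2 = N) (j : ℕ) :
    II (kk κ j) f ^ 2 ≤ N * II (kk κ (j + 1)) f := by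
  have := II_sq (kk κ j) f
  have e : (fun g => kk κ j g⁻¹) = kk κ j := by funext g; exact (kk_SP h j).2.1 g
  rw [e, hN] at this
  exact this

lemma II_kk_pow {κ : G → ℝ} (h : SP κ) (f : X → ℝ) (N : ℝ) (hN : ∑ x, f x ^ 2 = N) (hN0 : 0 < N) (j : ℕ) :
    (|II κ f| / N) ^ (2 ^ j) ≤ |II (kk κ j) f| / N := by
  induction j with
  | zero => simp [kk]
  | succ j ih =>
    rw [pow_succ, pow_mul]
    calc _ ≤ (|II (kk κ j) f| / N) ^ 2 := by gcongr
      _ = II (kk κ j) f ^ 2 / N ^ 2 := by rw [div_pow, sq_abs]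
      _ ≤ (N * II (kk κ (j + 1)) f) / N ^ 2 := by gcongr; exact II_kk h f N hN j
      _ = II (kk κ (j + 1)) f / N := by field_simp
      _ ≤ _ := by gcongr; exact le_abs_self _

end PartC

open Finset

section PartD
set_option linter.unusedSectionVars false
open scoped Pointwise
variable {p : ℕ} [Fact p.Prime]

abbrev PX (p : ℕ) [Fact p.Prime] := Projectivization (ZMod p) (Fin 2 → ZMod p)

noncomputable instance : Fintype (PX p) := Fintype.ofFinite _
noncomputable instance : DecidableEq (PX p) := Classical.decEq _

lemma PX_card : Fintype.card (PX p) = p + 1 := by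
  rw [← Nat.card_eq_fintype_card, Projectivization.card_of_finrank_two (ZMod p) (Fin 2 → ZMod p) (by simp)]
  simp

lemma PX_T (x y x' y' : PX p) (h : x ≠ y) (h' : x' ≠ y') : ∃ g : SLF (ZMod p), g • x = x' ∧ g • y = y' :=
  (MulAction.is_two_pretransitive_iff (G := SLF (ZMod p)) (α := PX p)).1 inferInstance h h'

lemma PX_T1 (x y : PX p) : ∃ g : SLF (ZMod p), g • x = y := by
  have : MulAction.IsPretransitive (SLF (ZMod p)) (PX p) := MulAction.isPretransitive_of_is_two_pretransitive
  exact MulAction.exists_smul_eq _ x y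

lemma SL_card : Fintype.card (SLF (ZMod p)) ≤ 2 * p ^ 3 := by
  have : Fintype.card (SLF (ZMod p)) ≤ Fintype.card (Bool × ZMod p × ZMod p × ZMod p) := by
    apply Fintype.card_le_of_injective (fun g : SLF (ZMod p) =>
      if g.1 0 0 = 0 then (true, g.1 0 1, g.1 1 1, 0) else (false, g.1 0 0, g.1 0 1, g.1 1 0))
    intro g g' h
    have d := dt g
    have d' := dt g'
    simp only at h
    by_cases h0 : g.1 0 0 = 0 <;> by_cases h0' : g'.1 0 0 = 0
    · simp only [h0, h0', if_true, Prod.mk.injEq, true_and, and_true] at h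
      rw [h0] at d; rw [h0', ← h.1] at d'
      refine sl_ext (h0.trans h0'.symm) h.1 ?_ h.2
      have hne : g.1 0 1 ≠ 0 := by intro h; rw [h] at d; simp at d
      apply mul_left_cancel₀ hne
      linear_combination d' - d
    · simp [h0, h0'] at h
    · simp [h0, h0'] at h
    · simp only [h0, h0', if_false, Prod.mk.injEq, true_and] at h
      refine sl_ext h.1 h.2.1 h.2.2 ?_
      apply mul_left_cancel₀ h0
      rw [← h.1, ← h.2.1, ← h.2.2] at d'
      linear_combination d - d'
  refine this.trans (le_of_eq ?_)
  simp [ZMod.card]; ring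

lemma II_le_p (f : PX p → ℝ) (hf : ∑ x, f x = 0) (m : SLF (ZMod p) → ℝ) :
    (II m f) ^ 2 ≤ 2 * (p : ℝ) ^ 2 * (∑ g, m g ^ 2) * (∑ x, f x ^ 2) ^ 2 := by
  have hp : (0 : ℝ) < p := by exact_mod_cast (Fact.out : p.Prime).pos
  have := II_le (G := SLF (ZMod p)) PX_T1 PX_T (by rw [PX_card]; have := (Fact.out : p.Prime).pos; omega) f hf m
  rw [PX_card] at this
  push_cast at this
  rw [add_sub_cancel_right] at this
  have hc : (Fintype.card (SLF (ZMod p)) : ℝ) ≤ 2 * (p : ℝ) ^ 3 := by exact_mod_cast SL_card (p := p)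
  have hm : 0 ≤ ∑ g, m g ^ 2 := Finset.sum_nonneg fun _ _ => sq_nonneg _
  have hN : 0 ≤ (∑ x, f x ^ 2) ^ 2 := sq_nonneg _
  have h2 : (II m f) ^ 2 * p ≤ (2 * (p : ℝ) ^ 2 * (∑ g, m g ^ 2) * (∑ x, f x ^ 2) ^ 2) * p := by
    calc _ ≤ _ := this
      _ ≤ (∑ g, m g ^ 2) * (2 * (p : ℝ) ^ 3 * (∑ x, f x ^ 2) ^ 2) := by gcongr
      _ = _ := by ring
  exact le_of_mul_le_mul_right h2 hp

def pt (s : ZMod p) : PX p := Projectivization.mk (ZMod p) ![s, 1] (by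
  intro h; have := congrFun h 1; simp at this)

lemma pt_inj : Function.Injective (pt (p := p)) := by
  intro s s' h
  unfold pt at h
  rw [Projectivization.mk_eq_mk_iff'] at h
  obtain ⟨a, ha⟩ := h
  have h1 := congrFun ha 1
  have h0 := congrFun ha 0
  simp at h1 h0
  subst h1; simpa using h0.symm

def uu (b : ZMod p) : SLF (ZMod p) := nn (1, 0) b
def hh (l : ZMod p) : SLF (ZMod p) := nn (0, 1) (-l)

lemma nn_add (v : ZMod p × ZMod p) (s t : ZMod p) : nn v s * nn v t = nn v (s + t) := by
  apply sl_ext <;>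
  simp only [Matrix.SpecialLinearGroup.coe_mul, Matrix.mul_apply, Fin.sum_univ_two, nn00, nn01, nn10, nn11] <;> ring

lemma nn_inv (v : ZMod p × ZMod p) (s : ZMod p) : (nn v s)⁻¹ = nn v (-s) := by
  rw [inv_eq_iff_mul_eq_one, nn_add, add_neg_cancel, nn_zero]

lemma nn_t_inj {v : ZMod p × ZMod p} (hv : v ≠ 0) : Function.Injective (nn v) := by
  intro s t h
  have h1 : nn v (s - t) = 1 := by rw [sub_eq_add_neg, ← nn_add, ← nn_inv, h, mul_inv_cancel]
  by_contra hc
  exact (mem_VV.1 (nn_mem hv (sub_ne_zero.2 hc))).1 h1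

lemma sl_smul_mk (g : SLF (ZMod p)) (v w : Fin 2 → ZMod p) (hv : v ≠ 0) (hw : w ≠ 0)
    (h : ∃ a : ZMod p, a • w = g.1.mulVec v) :
    g • (Projectivization.mk (ZMod p) v hv : PX p) = Projectivization.mk (ZMod p) w hw := by
  rw [Projectivization.smul_mk, Projectivization.mk_eq_mk_iff']
  exact h

lemma uu_pt (b s : ZMod p) : uu b • pt s = pt (s + b) := by
  unfold pt
  apply sl_smul_mk
  refine ⟨1, ?_⟩
  ext i
  fin_cases i <;> simp [uu, nn, Matrix.mulVec, Matrix.vecHead, Matrix.vecTail]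

lemma hh_pt {l a1 a2 : ZMod p} (h1 : a1 ≠ 0) (h2 : a2 ≠ 0) (h : a1⁻¹ - a2⁻¹ = l) : hh l • pt a2 = pt a1 := by
  unfold pt
  apply sl_smul_mk
  refine ⟨l * a2 + 1, ?_⟩
  ext i
  fin_cases i <;> simp [hh, nn, Matrix.mulVec, Matrix.vecHead, Matrix.vecTail]
  rw [← h]; field_simp; ring

def wd (l : ZMod p) (b : ZMod p × ZMod p) : SLF (ZMod p) := uu b.1 * hh l * uu (-b.2)

noncomputable def mu (l : ZMod p) (B : Finset (ZMod p)) (g : SLF (ZMod p)) : ℝ :=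
  (∑ b ∈ B ×ˢ B, if wd l b = g then (1 : ℝ) else 0) / (B.card : ℝ) ^ 2

noncomputable def ka (l : ZMod p) (B : Finset (ZMod p)) : SLF (ZMod p) → ℝ :=
  cv (mu l B) (fun g => mu l B g⁻¹)

lemma mu_sum (l : ZMod p) (B : Finset (ZMod p)) (φ : SLF (ZMod p) → ℝ) :
    ∑ g, mu l B g * φ g = (∑ b ∈ B ×ˢ B, φ (wd l b)) / (B.card : ℝ) ^ 2 := by
  simp only [mu, div_mul_eq_mul_div, ← Finset.sum_div, Finset.sum_mul]
  rw [Finset.sum_comm]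
  simp

lemma mu_nonneg (l : ZMod p) (B : Finset (ZMod p)) (g) : 0 ≤ mu l B g := by
  unfold mu
  apply div_nonneg _ (sq_nonneg _)
  apply Finset.sum_nonneg; intro b _; split_ifs <;> norm_num

lemma mu_one (l : ZMod p) {B : Finset (ZMod p)} (hB : B.Nonempty) : ∑ g, mu l B g = 1 := by
  have := mu_sum l B (fun _ => 1)
  simp only [mul_one] at this
  rw [this]
  have : (B.card : ℝ) ≠ 0 := by simpa using hB.ne_empty
  simp [Finset.card_product]; field_simp

lemma mu_le (l : ZMod p) {B : Finset (ZMod p)} (hB : B.Nonempty) (g) : mu l B g ≤ 1 / B.card := by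
  have hb : (0 : ℝ) < B.card := by exact_mod_cast hB.card_pos
  unfold mu
  rw [div_le_div_iff₀ (by positivity) hb]
  have : (∑ b ∈ B ×ˢ B, if wd l b = g then (1 : ℝ) else 0) ≤ B.card := by
    rw [Finset.sum_boole]
    norm_cast
    apply Finset.card_le_card_of_injOn (fun b => b.2)
    · intro b hb; simp at hb; simp [hb]
    · rintro ⟨a, b⟩ h ⟨a', b'⟩ h' he
      simp only at he; subst he
      have e1 := (mem_filter.1 h).2
      have e2 := (mem_filter.1 h').2
      rw [← e2] at e1
      have := mul_right_cancel (mul_right_cancel e1)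
      have := nn_t_inj (by simp) this
      simp only at this; rw [this]
  nlinarith

lemma ka_SP (l : ZMod p) {B : Finset (ZMod p)} (hB : B.Nonempty) : SP (ka l B) := by
  refine ⟨fun x => Finset.sum_nonneg fun y _ => mul_nonneg (mu_nonneg _ _ _) (mu_nonneg _ _ _), fun x => ?_, ?_⟩
  · unfold ka
    have := cv_apply' (mu l B) (fun g => mu l B g⁻¹) x 1
    rw [mul_one] at this
    rw [this]
    unfold _root_.cv
    refine Finset.sum_congr rfl fun y _ => ?_
    simp [mul_comm]
  · unfold ka; rw [cv_sum, mu_one l hB]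
    have := Equiv.sum_comp (Equiv.inv (SLF (ZMod p))) (mu l B)
    simp only [Equiv.inv_apply] at this
    rw [this, mu_one l hB]; norm_num

lemma ka_le (l : ZMod p) {B : Finset (ZMod p)} (hB : B.Nonempty) (g) : ka l B g ≤ 1 / B.card := by
  unfold ka cv
  calc _ ≤ ∑ y, mu l B y * (1 / B.card) := Finset.sum_le_sum fun y _ =>
        mul_le_mul_of_nonneg_left (mu_le l hB _) (mu_nonneg _ _ _)
    _ = _ := by rw [← Finset.sum_mul, mu_one l hB, one_mul]

lemma ka_set (l : ZMod p) (B : Finset (ZMod p)) (Y : Finset (SLF (ZMod p))) :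
    ∑ g ∈ Y, ka l B g =
      ((((B ×ˢ B) ×ˢ (B ×ˢ B)).filter fun q => wd l q.1 * (wd l q.2)⁻¹ ∈ Y).card : ℝ) / (B.card : ℝ) ^ 4 := by
  have e1 : ∑ g ∈ Y, ka l B g = ∑ g, ka l B g * (if g ∈ Y then 1 else 0) := by simp
  have e2 : ∀ φ : SLF (ZMod p) → ℝ, ∑ g, ka l B g * φ g =
      ∑ y, mu l B y * ∑ z, mu l B z * φ (y * z⁻¹) := by
    intro φ
    simp only [ka, cv, Finset.sum_mul, Finset.mul_sum]
    rw [Finset.sum_comm]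
    apply Finset.sum_congr rfl; intro y _
    rw [← Equiv.sum_comp ((Equiv.inv _).trans (Equiv.mulLeft y))]
    apply Finset.sum_congr rfl; intro z _
    simp [mul_assoc]
  rw [e1, e2]
  simp only [mu_sum]
  rw [Finset.card_filter]
  push_cast
  rw [Finset.sum_product (B ×ˢ B) (B ×ˢ B)]
  rw [← Finset.sum_div]
  rw [div_div]; congr 1; ring

/-- noncollapse -/
lemma ka_pairs {l : ZMod p} (hl : l ≠ 0) {B : Finset (ZMod p)} (hB : B.Nonempty)
    {S : Finset (SLF (ZMod p))} (hS : S⁻¹ = S) (x : SLF (ZMod p))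
    (h : 1 / (B.card : ℝ) < ∑ g ∈ x • (S * S), ka l B g) :
    ∃ (u u' : SLF (ZMod p)) (v' : ZMod p × ZMod p), u ∈ S ^ 4 ∧ u ≠ 1 ∧ ac u (1, 0) = (1, 0) ∧
     u' ∈ S ^ 4 ∧ u' ≠ 1 ∧ v' ≠ 0 ∧ ac u' v' = v' ∧ cr (1, 0) v' ≠ 0 := by
  have hb : (0 : ℝ) < B.card := by exact_mod_cast hB.card_pos
  rw [ka_set] at h
  set Q := ((B ×ˢ B) ×ˢ (B ×ˢ B)).filter fun q => wd l q.1 * (wd l q.2)⁻¹ ∈ x • (S * S) with hQ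
  have hQc : (B ×ˢ B ×ˢ B).card < Q.card := by
    rw [div_lt_div_iff₀ hb (by positivity)] at h
    have : (B.card : ℝ) ^ 3 < Q.card := by
      have : (B.card : ℝ) ^ 3 * B.card < Q.card * B.card := by linarith
      exact lt_of_mul_lt_mul_right this hb.le
    have : B.card ^ 3 < Q.card := by exact_mod_cast this
    simp only [Finset.card_product]; linarith [pow_succ B.card 2, sq B.card, mul_assoc B.card B.card B.card]
  have hdiv : ∀ g ∈ x • (S * S), ∀ g' ∈ x • (S * S), g⁻¹ * g' ∈ S ^ 4 := by
    intro g hg g' hg'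
    obtain ⟨s, hs, rfl⟩ := Finset.mem_smul_finset.1 hg
    obtain ⟨s', hs', rfl⟩ := Finset.mem_smul_finset.1 hg'
    have : (x • s)⁻¹ * x • s' = s⁻¹ * s' := by simp only [smul_eq_mul]; group
    rw [this]
    have e : S ^ 4 = (S * S)⁻¹ * (S * S) := by
      rw [mul_inv_rev, hS]; simp only [pow_succ, pow_zero, one_mul, mul_assoc]
    rw [e]
    exact mul_mem_mul (Finset.inv_mem_inv hs) hs'
  have hmaps : ∀ q ∈ Q, q.1.1 ∈ B ∧ q.1.2 ∈ B ∧ q.2.1 ∈ B ∧ q.2.2 ∈ B := by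
    intro q hq
    have := (mem_filter.1 hq).1
    simp only [mem_product] at this
    tauto
  obtain ⟨⟨⟨b1, b2⟩, b4, b3⟩, hq, ⟨⟨b1', b2'⟩, b4', b3'⟩, hq', hne, he⟩ :=
    Finset.exists_ne_map_eq_of_card_lt_of_maps_to hQc
      (f := fun q : (ZMod p × ZMod p) × (ZMod p × ZMod p) => (q.1.1, q.1.2, q.2.2))
      (by intro q hq; have := hmaps q hq; simp only [mem_coe, mem_product]; tauto)
  obtain ⟨⟨⟨c1, c2⟩, c4, c3⟩, hr, ⟨⟨c1', c2'⟩, c4', c3'⟩, hr', hne2, he2⟩ :=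
    Finset.exists_ne_map_eq_of_card_lt_of_maps_to hQc
      (f := fun q : (ZMod p × ZMod p) × (ZMod p × ZMod p) => (q.1.1, q.1.2, q.2.1))
      (by intro q hq; have := hmaps q hq; simp only [mem_coe, mem_product]; tauto)
  simp only [Prod.mk.injEq] at he he2
  obtain ⟨rfl, rfl, rfl⟩ := he
  obtain ⟨rfl, rfl, rfl⟩ := he2
  have hne4 : b4 ≠ b4' := by rintro rfl; exact hne rfl
  have hne3 : c3 ≠ c3' := by rintro rfl; exact hne2 rfl
  have k1 := hdiv _ (mem_filter.1 hq).2 _ (mem_filter.1 hq').2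
  have k2 := hdiv _ (mem_filter.1 hr).2 _ (mem_filter.1 hr').2
  have w1 : (wd l (b1, b2) * (wd l (b4, b3))⁻¹)⁻¹ * (wd l (b1, b2) * (wd l (b4', b3))⁻¹) = uu (b4 - b4') := by
    simp only [wd, uu, sub_eq_add_neg, ← nn_add, ← nn_inv]; group
  have w2 : (wd l (c1, c2) * (wd l (c4, c3))⁻¹)⁻¹ * (wd l (c1, c2) * (wd l (c4, c3'))⁻¹) =
      nn (ac (uu c4 * hh l) (1, 0)) (c3' - c3) := by
    rw [← nn_conj, sub_eq_add_neg, add_comm, ← nn_add]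
    simp only [wd, uu, ← nn_inv]; group
  rw [w1] at k1
  rw [w2] at k2
  have hv0 : ac (uu c4 * hh l) (1, 0) ≠ 0 := ac_ne_zero _ (by simp)
  refine ⟨_, _, ac (uu c4 * hh l) (1, 0), k1, ?_, nn_fix _ _, k2, ?_, hv0, nn_fix _ _, ?_⟩
  · exact (mem_VV.1 (nn_mem (by simp) (sub_ne_zero.2 hne4))).1
  · exact (mem_VV.1 (nn_mem hv0 (sub_ne_zero.2 hne3.symm))).1
  · rw [ac_mul]
    simp [ac, uu, hh, nn, cr, hl]

end PartD

open Finset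

section PartF
set_option linter.unusedSectionVars false
open scoped Pointwise

section
variable {G : Type*} [Group G] [Fintype G] [DecidableEq G]

lemma sum_smul_fin (y : G) (T : Finset G) (φ : G → ℝ) : ∑ g ∈ y • T, φ g = ∑ g ∈ T, φ (y * g) := by
  have : y • T = T.image (fun g => y * g) := rfl
  rw [this, Finset.sum_image]
  intro a _ b _ h
  exact mul_left_cancel h

lemma sum_bi_le (ν : G → ℝ) (hν : ∀ x, 0 ≤ ν x) (F : Finset G) (t : G → Finset G) :
    ∑ x ∈ F.biUnion t, ν x ≤ ∑ f ∈ F, ∑ x ∈ t f, ν x := by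
  induction F using Finset.induction_on with
  | empty => simp
  | insert a F ha ih =>
    rw [Finset.biUnion_insert, Finset.sum_insert ha]
    have := Finset.sum_union_inter (s₁ := t a) (s₂ := F.biUnion t) (f := ν)
    have h2 : 0 ≤ ∑ x ∈ t a ∩ F.biUnion t, ν x := Finset.sum_nonneg fun x _ => hν x
    linarith

lemma desc_step {m : G → ℝ} (hm : SP m) {T : Finset G} {c : ℝ} {x : G} (h : c ≤ ∑ g ∈ x • T, cv m m g) :
    ∃ x' : G, c ≤ ∑ g ∈ x' • T, m g := by
  have e : ∑ g ∈ x • T, cv m m g = ∑ y, m y * ∑ g ∈ (y⁻¹ * x) • T, m g := by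
    unfold cv
    rw [Finset.sum_comm]
    apply Finset.sum_congr rfl; intro y _
    rw [← Finset.mul_sum, sum_smul_fin, sum_smul_fin]
    simp only [mul_assoc]
  by_contra hc
  push Not at hc
  have h1 : ∑ y, m y * ∑ g ∈ (y⁻¹ * x) • T, m g < ∑ y, m y * c := by
    obtain ⟨y, hy⟩ : ∃ y, 0 < m y := by
      by_contra hh
      push Not at hh
      have := hm.2.2
      have h2 : ∑ x, m x ≤ 0 := Finset.sum_nonpos fun i _ => hh i
      linarith
    apply Finset.sum_lt_sum
    · intro i _; exact mul_le_mul_of_nonneg_left (hc _).le (hm.1 i)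
    · exact ⟨y, mem_univ _, mul_lt_mul_of_pos_left (hc _) hy⟩
  rw [← Finset.sum_mul, hm.2.2, one_mul, ← e] at h1
  linarith

lemma desc {κ : G → ℝ} (hκ : SP κ) {T : Finset G} {c : ℝ} (j : ℕ) : ∀ {x : G} (_ : c ≤ ∑ g ∈ x • T, kk κ j g),
    ∃ x' : G, c ≤ ∑ g ∈ x' • T, κ g := by
  induction j with
  | zero => intro x h; exact ⟨x, h⟩
  | succ j ih =>
    intro x h
    obtain ⟨x', h'⟩ := desc_step (kk_SP hκ j) h
    exact ih h'

lemma kk_pos {κ : G → ℝ} (hκ : SP κ) (j : ℕ) : 0 < kk κ (j + 1) 1 := by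
  show 0 < cv (kk κ j) (kk κ j) 1
  rw [cv_one (kk_SP hκ j)]
  have h0 : 0 ≤ ∑ x, kk κ j x ^ 2 := Finset.sum_nonneg fun _ _ => sq_nonneg _
  rcases h0.lt_or_eq with h | h
  · exact h
  · exfalso
    have h2 := (Finset.sum_eq_zero_iff_of_nonneg (fun _ _ => sq_nonneg _)).1 h.symm
    have : ∑ x, kk κ j x = 0 := Finset.sum_eq_zero fun x hx => by simpa using h2 x hx
    rw [(kk_SP hκ j).2.2] at this
    norm_num at this

lemma kk_anti {κ : G → ℝ} (hκ : SP κ) (j : ℕ) : kk κ (j + 2) 1 ≤ kk κ (j + 1) 1 :=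
  cv_le (kk_SP hκ (j + 1)) (fun x => cv_le_one (kk_SP hκ j) x) 1

lemma kk_sup {κ : G → ℝ} (hκ : SP κ) {M : ℝ} (hM : ∀ x, κ x ≤ M) (j : ℕ) : kk κ (j + 1) 1 ≤ M := by
  induction j with
  | zero => exact cv_le hκ hM 1
  | succ j ih => exact (kk_anti hκ j).trans ih

lemma cover {ν : G → ℝ} (hν : SP ν) {A F T : Finset G} {c d : ℝ} (hd : 0 < d) (h : c ≤ ∑ x ∈ A, ν x)
    (hc : 0 < c)
    (hF : (F.card : ℝ) ≤ d) (hA : A⁻¹ ⊆ F * T) : ∃ f : G, c / d ≤ ∑ x ∈ f • T, ν x := by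
  have h1 : ∑ x ∈ A⁻¹, ν x = ∑ x ∈ A, ν x := by
    rw [Finset.sum_inv_index]
    exact Finset.sum_congr rfl fun x _ => hν.2.1 x
  by_contra hcon
  push Not at hcon
  have h2 : ∑ x ∈ A⁻¹, ν x ≤ ∑ f ∈ F, ∑ x ∈ f • T, ν x := by
    calc _ ≤ ∑ x ∈ F.biUnion (fun f => f • T), ν x := by
          apply Finset.sum_le_sum_of_subset_of_nonneg _ fun i _ _ => hν.1 i
          intro x hx
          obtain ⟨f, hf, t, ht, rfl⟩ := mem_mul.1 (hA hx)
          exact mem_biUnion.2 ⟨f, hf, Finset.smul_mem_smul_finset ht⟩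
      _ ≤ _ := sum_bi_le ν hν.1 _ _
  have hFne : F.Nonempty := by
    by_contra hn
    rw [not_nonempty_iff_eq_empty] at hn
    subst hn
    rw [h1, Finset.sum_empty] at h2
    linarith
  have h3 : ∑ f ∈ F, ∑ x ∈ f • T, ν x < ∑ f ∈ F, c / d := Finset.sum_lt_sum_of_nonempty hFne fun f _ => hcon f
  rw [Finset.sum_const, nsmul_eq_mul] at h3
  have h4 : (F.card : ℝ) * (c / d) ≤ d * (c / d) := by gcongr
  have h5 : d * (c / d) = c := by field_simp
  linarith
end

end PartF

open Finset

section PartG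
set_option linter.unusedSectionVars false
open scoped Pointwise
variable {p : ℕ} [Fact p.Prime]

lemma plateau (hp2 : p ≠ 2) {l : ZMod p} (hl : l ≠ 0) {B : Finset (ZMod p)} {D : ℝ} (hD : 4096 ≤ D)
    (hB : D ^ 2000 ≤ B.card) (j : ℕ)
    (hpl : kk (ka l B) (j + 1) 1 / D ≤ kk (ka l B) (j + 3) 1) :
    (p : ℝ) ^ 3 * kk (ka l B) (j + 1) 1 ≤ D ^ 2000 := by
  have hD0 : 0 < D := by linarith
  have hD1 : 1 ≤ D := by linarith
  have hb0 : (0 : ℝ) < B.card := lt_of_lt_of_le (pow_pos hD0 _) hB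
  have hBne : B.Nonempty := by
    rw [← Finset.card_pos]; exact_mod_cast hb0
  have hκ := ka_SP l hBne
  have hν := kk_SP hκ (j + 1)
  have hM := kk_pos hκ j
  have hMB : kk (ka l B) (j + 1) 1 ≤ 1 / B.card := kk_sup hκ (ka_le l hBne) j
  obtain ⟨A, hA1, hA2⟩ := bsg hν hM hD1 (fun x => cv_le_one (kk_SP hκ j) x) hpl
  have hν8 : SP (kk (ka l B) (j + 4)) := kk_SP hκ (j + 4)
  have hsup : ∀ x, kk (ka l B) (j + 1) x ≤ kk (ka l B) (j + 1) 1 := fun x => cv_le_one (kk_SP hκ j) x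
  have hA2' : ∀ x ∈ A, ∀ x' ∈ A, kk (ka l B) (j + 1) 1 / (1024 * D ^ 5) ≤ kk (ka l B) (j + 4) (x⁻¹ * x') := hA2
  clear hA2
  set M := kk (ka l B) (j + 1) 1 with hMdef
  have m1 : 1 ≤ 4 * D * M * A.card := by
    have : ∑ x ∈ A, kk (ka l B) (j + 1) x ≤ A.card * M := by
      rw [← nsmul_eq_mul]; exact Finset.sum_le_card_nsmul _ _ _ fun x _ => hsup x
    have h2 := hA1.trans this
    rw [div_le_iff₀ (by positivity)] at h2
    linarith
  have hAne : A.Nonempty := by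
    rw [nonempty_iff_ne_empty]; rintro rfl; simp at m1; linarith
  have m2 : ((A⁻¹ * A).card : ℝ) * M ≤ 1024 * D ^ 5 := by
    have h1 : ((A⁻¹ * A).card : ℝ) * (M / (1024 * D ^ 5)) ≤ ∑ g ∈ A⁻¹ * A, kk (ka l B) (j + 4) g := by
      rw [← nsmul_eq_mul]; apply Finset.card_nsmul_le_sum
      intro g hg
      obtain ⟨a, ha, b, hb, rfl⟩ := mem_mul.1 hg
      have := hA2' a⁻¹ (Finset.mem_inv'.1 ha) b hb
      rwa [inv_inv] at this
    have h2 : ∑ g ∈ A⁻¹ * A, kk (ka l B) (j + 4) g ≤ 1 := by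
      rw [← hν8.2.2]
      exact Finset.sum_le_sum_of_subset_of_nonneg (subset_univ _) fun i _ _ => hν8.1 i
    have h3 := h1.trans h2
    rw [mul_div_assoc', div_le_one (by positivity)] at h3
    exact h3
  have m3 : ((A⁻¹ * A).card : ℝ) ≤ D ^ 7 * A.card := by
    have : ((A⁻¹ * A).card : ℝ) * M ≤ (D ^ 7 * A.card) * M := by
      calc _ ≤ 1024 * D ^ 5 * 1 := by linarith
        _ ≤ 1024 * D ^ 5 * (4 * D * M * A.card) := by gcongr
        _ = 4096 * (D ^ 6 * A.card * M) := by ring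
        _ ≤ D * (D ^ 6 * A.card * M) := by gcongr
        _ = _ := by ring
    exact le_of_mul_le_mul_right this hM
  obtain ⟨S, hS, hS1, m4, m5, F, hF, hcov⟩ := approx_group A hAne (one_le_pow₀ hD1) m3
  have m6 : (A.card : ℝ) ≤ D ^ 8 * S.card := by
    calc _ ≤ _ := m4
      _ ≤ D * D ^ 7 * S.card := by gcongr; linarith
      _ = _ := by ring
  have m7 : (2 * (D ^ 7) ^ 2) ≤ D ^ 15 := by
    calc _ ≤ D * (D ^ 7) ^ 2 := by gcongr; linarith
      _ = _ := by ring
  have m8 : ((S ^ 20).card : ℝ) ≤ D ^ 308 * S.card := by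
    calc _ ≤ _ := m5 20
      _ ≤ (D ^ 15) ^ 20 * (D ^ 8 * S.card) := by gcongr
      _ = _ := by rw [← pow_mul, ← mul_assoc, ← pow_add]
  have m9 : (S.card : ℝ) * M ≤ D ^ 21 := by
    have h1 := m5 1
    rw [pow_one, pow_one] at h1
    have h2 : (A.card : ℝ) ≤ (A⁻¹ * A).card := by
      exact_mod_cast Finset.card_le_card_mul_left (Finset.Nonempty.inv hAne)
    calc (S.card : ℝ) * M ≤ (D ^ 15 * (A⁻¹ * A).card) * M := by
          gcongr
          exact h1.trans (by gcongr)
      _ = D ^ 15 * ((A⁻¹ * A).card * M) := by ring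
      _ ≤ D ^ 15 * (1024 * D ^ 5) := by gcongr
      _ = 1024 * D ^ 20 := by ring
      _ ≤ D * D ^ 20 := by gcongr; linarith
      _ = _ := by ring
  have m10 : D ^ 1990 ≤ S.card := by
    have h1 : (B.card : ℝ) * M ≤ 1 := by
      rw [le_div_iff₀ hb0] at hMB; linarith
    have h2 : (B.card : ℝ) ≤ D ^ 10 * S.card := by
      calc (B.card : ℝ) = B.card * 1 := by ring
        _ ≤ B.card * (4 * D * M * A.card) := by gcongr
        _ = (B.card * M) * (4 * D * A.card) := by ring
        _ ≤ 1 * (4 * D * A.card) := by gcongr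
        _ ≤ 1 * (D * D * (D ^ 8 * S.card)) := by gcongr; linarith
        _ = _ := by ring
    have h3 : D ^ 10 * D ^ 1990 ≤ D ^ 10 * S.card := by
      rw [← pow_add]; exact hB.trans h2
    exact le_of_mul_le_mul_left h3 (pow_pos hD0 _)
  have m11 : 1024 * (D ^ 308) ^ 2 ≤ S.card := by
    refine le_trans ?_ m10
    calc 1024 * (D ^ 308) ^ 2 ≤ D * (D ^ 308) ^ 2 := by gcongr; linarith
      _ = D ^ 617 := by rw [← pow_mul, ← pow_succ']
      _ ≤ _ := pow_le_pow_right₀ hD1 (by norm_num)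
  obtain ⟨f, hf⟩ := cover hν (d := D ^ 22) (pow_pos hD0 _) hA1 (by positivity) (hF.trans (by
    calc 4 * (D ^ 7) ^ 3 ≤ D * (D ^ 7) ^ 3 := by gcongr; linarith
      _ = _ := by ring)) hcov
  obtain ⟨x, hx⟩ := desc hκ (j + 1) hf
  have hlt : 1 / (B.card : ℝ) < ∑ g ∈ x • (S * S), ka l B g := by
    refine lt_of_lt_of_le ?_ hx
    rw [div_div]
    apply one_div_lt_one_div_of_lt (by positivity)
    refine lt_of_lt_of_le ?_ hB
    calc 4 * D * D ^ 22 < D * D * D ^ 22 := by gcongr; linarith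
      _ = D ^ 24 := by ring
      _ ≤ _ := pow_le_pow_right₀ hD1 (by norm_num)
  obtain ⟨u, u', v', k1, k2, k3, k4, k5, k6, k7, k8⟩ := ka_pairs hl hBne hS x hlt
  have hpv := pivot hp2 hS hS1 (one_le_pow₀ hD1) m8 m11 k1 k2 k3 k4 k5 k6 k7 k8
  calc (p : ℝ) ^ 3 * M ≤ (16384 * (D ^ 308) ^ 4 * S.card) * M := by gcongr
    _ = 16384 * (D ^ 308) ^ 4 * (S.card * M) := by ring
    _ ≤ (D * D) * (D ^ 308) ^ 4 * D ^ 21 := by gcongr; nlinarith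
    _ = D ^ 1255 := by rw [← pow_mul, ← pow_two, ← pow_add, ← pow_add]
    _ ≤ _ := pow_le_pow_right₀ hD1 (by norm_num)

lemma growth (hp2 : p ≠ 2) {l : ZMod p} (hl : l ≠ 0) {B : Finset (ZMod p)} {D : ℝ} (hD : 4096 ≤ D)
    (hB : D ^ 2000 ≤ B.card) (t : ℕ) :
    kk (ka l B) (2 * t + 1) 1 * D ^ t ≤ 1 ∨ (p : ℝ) ^ 3 * kk (ka l B) (2 * t + 1) 1 ≤ D ^ 2000 := by
  have hD0 : 0 < D := by linarith
  have hb0 : (0 : ℝ) < B.card := lt_of_lt_of_le (pow_pos hD0 _) hB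
  have hBne : B.Nonempty := by
    rw [← Finset.card_pos]; exact_mod_cast hb0
  have hκ := ka_SP l hBne
  induction t with
  | zero =>
    left
    have h1 := kk_sup hκ (ka_le l hBne) 0
    have h2 : 1 / (B.card : ℝ) ≤ 1 := by
      rw [div_le_one hb0]
      exact le_trans (one_le_pow₀ (by linarith)) hB
    simp only [mul_zero, pow_zero, mul_one]
    exact h1.trans h2
  | succ t ih =>
    have e : 2 * (t + 1) + 1 = 2 * t + 3 := by ring
    rw [e]
    have hanti : kk (ka l B) (2 * t + 3) 1 ≤ kk (ka l B) (2 * t + 1) 1 :=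
      (kk_anti hκ (2 * t + 1)).trans (kk_anti hκ (2 * t))
    by_cases hpl : kk (ka l B) (2 * t + 1) 1 / D ≤ kk (ka l B) (2 * t + 3) 1
    · right
      refine le_trans ?_ (plateau hp2 hl hD hB (2 * t) hpl)
      gcongr
    · rcases ih with h | h
      · left
        push Not at hpl
        rw [lt_div_iff₀ hD0] at hpl
        calc kk (ka l B) (2 * t + 3) 1 * D ^ (t + 1) = (kk (ka l B) (2 * t + 3) 1 * D) * D ^ t := by ring
          _ ≤ kk (ka l B) (2 * t + 1) 1 * D ^ t := by gcongr
          _ ≤ 1 := h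
      · right
        refine le_trans ?_ h
        gcongr

end PartG

section PartH
set_option linter.unusedSectionVars false
variable {p : ℕ} [Fact p.Prime]

lemma II_mu (l : ZMod p) (B : Finset (ZMod p)) (f : PX p → ℝ) :
    II (mu l B) f = (∑ b ∈ B ×ˢ B, ∑ x, f x * f ((wd l b)⁻¹ • x)) / (B.card : ℝ) ^ 2 := by
  rw [← mu_sum l B (fun g => ∑ x, f x * f (g⁻¹ • x))]
  simp only [II, TT, Finset.mul_sum]
  rw [Finset.sum_comm]
  apply Finset.sum_congr rfl; intro y _
  apply Finset.sum_congr rfl; intro x _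
  ring

noncomputable def indS (S : Finset (ZMod p)) (x : PX p) : ℝ := if x ∈ S.image pt then 1 else 0

lemma indS_sum (S : Finset (ZMod p)) : ∑ x, indS S x = S.card := by
  simp only [indS]
  rw [Finset.sum_boole]
  simp only [Finset.filter_mem_eq_inter, Finset.univ_inter]
  rw [Finset.card_image_of_injective _ pt_inj]

lemma count_le {l : ZMod p} {A B : Finset (ZMod p)} (hA : 0 ∉ A) (hB : B.Nonempty) :
    (((A ×ˢ A).filter fun x => x.1⁻¹ - x.2⁻¹ = l).card : ℝ) ≤ II (mu l B) (indS (sumSet p A B)) := by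
  have hb : (0 : ℝ) < B.card := by exact_mod_cast hB.card_pos
  rw [II_mu, le_div_iff₀ (by positivity)]
  set N := ((A ×ˢ A).filter fun x => x.1⁻¹ - x.2⁻¹ = l) with hN
  have : ∀ b ∈ B ×ˢ B, (N.card : ℝ) ≤ ∑ x, indS (sumSet p A B) x * indS (sumSet p A B) ((wd l b)⁻¹ • x) := by
    rintro ⟨b1, b2⟩ hbb
    simp only [mem_product] at hbb
    have e : ∀ x : PX p, indS (sumSet p A B) x * indS (sumSet p A B) ((wd l (b1, b2))⁻¹ • x) =
        if (x ∈ (sumSet p A B).image pt ∧ (wd l (b1, b2))⁻¹ • x ∈ (sumSet p A B).image pt) then 1 else 0 := by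
      intro x; unfold indS; split_ifs <;> simp_all
    simp only [e]
    rw [Finset.sum_boole]
    norm_cast
    apply Finset.card_le_card_of_injOn (fun a => pt (a.1 + b1))
    · rintro ⟨a1, a2⟩ ha
      simp only [hN, mem_coe, mem_filter, mem_product] at ha
      simp only [mem_coe, mem_filter, mem_univ, true_and]
      have h1 : a1 ≠ 0 := by rintro rfl; exact hA ha.1.1
      have h2 : a2 ≠ 0 := by rintro rfl; exact hA ha.1.2
      have e2 : (wd l (b1, b2))⁻¹ • pt (a1 + b1) = pt (a2 + b2) := by
        rw [inv_smul_eq_iff]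
        simp only [wd, mul_smul, uu_pt, add_neg_cancel_right, hh_pt h1 h2 ha.2]
      rw [e2]
      refine ⟨mem_image_of_mem _ ?_, mem_image_of_mem _ ?_⟩
      · exact mem_image.2 ⟨(a1, b1), mem_product.2 ⟨ha.1.1, hbb.1⟩, rfl⟩
      · exact mem_image.2 ⟨(a2, b2), mem_product.2 ⟨ha.1.2, hbb.2⟩, rfl⟩
    · rintro ⟨a1, a2⟩ ha ⟨a1', a2'⟩ ha' he
      simp only [hN, mem_coe, mem_filter, mem_product] at ha ha' he
      have := add_right_cancel (pt_inj he)
      subst this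
      have : a2⁻¹ = a2'⁻¹ := by linear_combination ha'.2 - ha.2
      rw [inv_inj] at this
      rw [this]
  calc (N.card : ℝ) * (B.card : ℝ) ^ 2 = ∑ b ∈ B ×ˢ B, (N.card : ℝ) := by
        rw [Finset.sum_const, Finset.card_product, nsmul_eq_mul]; push_cast; ring
    _ ≤ _ := Finset.sum_le_sum this

lemma II_shift {m : SLF (ZMod p) → ℝ} (hm : ∑ g, m g = 1) (f : PX p → ℝ) (hf : ∑ x, f x = 0) (c : ℝ) :
    II m (fun x => f x + c) = II m f + c ^ 2 * (p + 1) := by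
  have h1 : ∀ x, TT m (fun x => f x + c) x = TT m f x + c := by
    intro x
    simp only [TT, mul_add, Finset.sum_add_distrib, ← Finset.sum_mul, hm, one_mul]
  have h2 : ∑ x, TT m f x = 0 := by
    simp only [TT]
    rw [Finset.sum_comm]
    apply Finset.sum_eq_zero
    intro g _
    rw [← Finset.mul_sum, sum_smul g⁻¹ f, hf, mul_zero]
  have h3 : II m (fun x => f x + c) = ∑ x, (f x * TT m f x + c * f x + c * TT m f x + c ^ 2) := by
    unfold II
    apply Finset.sum_congr rfl; intro x _
    rw [h1]; ring
  rw [h3]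
  simp only [Finset.sum_add_distrib, ← Finset.mul_sum, hf, h2, Finset.sum_const, Finset.card_univ, PX_card, nsmul_eq_mul]
  push_cast
  unfold II
  ring

lemma spec {l : ZMod p} {B : Finset (ZMod p)} (hB : B.Nonempty) (f : PX p → ℝ) (hf : ∑ x, f x = 0)
    {N : ℝ} (hN : ∑ x, f x ^ 2 = N) (hN0 : 0 < N) (i : ℕ) :
    (|II (mu l B) f| / N) ^ (2 ^ (i + 2)) ≤ 2 * (p : ℝ) ^ 2 * kk (ka l B) (i + 1) 1 := by
  have hκ := ka_SP l hB
  have h1 : (|II (mu l B) f| / N) ^ 2 ≤ |II (ka l B) f| / N := by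
    have := II_sq (mu l B) f
    rw [hN] at this
    calc _ = II (mu l B) f ^ 2 / N ^ 2 := by rw [div_pow, sq_abs]
      _ ≤ (N * II (ka l B) f) / N ^ 2 := by gcongr; exact this
      _ = II (ka l B) f / N := by field_simp
      _ ≤ _ := by gcongr; exact le_abs_self _
  have h2 := II_kk_pow hκ f N hN hN0 i
  have h3 : (|II (kk (ka l B) i) f| / N) ^ 2 ≤ 2 * (p : ℝ) ^ 2 * kk (ka l B) (i + 1) 1 := by
    have := II_le_p f hf (kk (ka l B) i)
    rw [hN, ← cv_one (kk_SP hκ i)] at this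
    rw [div_pow, sq_abs, div_le_iff₀ (by positivity)]
    exact this
  calc _ = (((|II (mu l B) f| / N) ^ 2) ^ (2 ^ i)) ^ 2 := by
        rw [← pow_mul, ← pow_mul]; congr 1; ring
    _ ≤ ((|II (ka l B) f| / N) ^ (2 ^ i)) ^ 2 := by gcongr
    _ ≤ (|II (kk (ka l B) i) f| / N) ^ 2 := by gcongr
    _ ≤ _ := h3

lemma mainN {l : ZMod p} {A B : Finset (ZMod p)} (hA : 0 ∉ A) (hA' : A.Nonempty) (hB : B.Nonempty)
    (i : ℕ) {δ : ℝ} (hδ : 0 ≤ δ) (hq : 2 * (p : ℝ) ^ 2 * kk (ka l B) (i + 1) 1 ≤ δ ^ (2 ^ (i + 2))) :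
    (((A ×ˢ A).filter fun x => x.1⁻¹ - x.2⁻¹ = l).card : ℝ) ≤
      ((sumSet p A B).card : ℝ) ^ 2 / p + δ * (sumSet p A B).card := by
  have hp : (0 : ℝ) < p := by exact_mod_cast (Fact.out : p.Prime).pos
  set S := sumSet p A B with hS
  set s : ℝ := (S.card : ℝ) with hs
  have hSne : S.Nonempty := by
    rw [hS]; unfold sumSet; exact (hA'.product hB).image _
  have hs0 : 0 < s := by rw [hs]; exact_mod_cast hSne.card_pos
  have hsp : s ≤ p := by
    rw [hs]
    have := Finset.card_le_univ S
    rw [ZMod.card] at this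
    exact_mod_cast this
  set c := s / (p + 1) with hc
  have hcp : c * (p + 1) = s := by rw [hc]; field_simp
  set f : PX p → ℝ := fun x => indS S x - c with hf
  have hf0 : ∑ x, f x = 0 := by
    simp only [hf, Finset.sum_sub_distrib, indS_sum, Finset.sum_const, Finset.card_univ, PX_card, nsmul_eq_mul]
    push_cast; linarith
  have hN : ∑ x, f x ^ 2 = s - c * s := by
    have : ∀ x, f x ^ 2 = indS S x - 2 * c * indS S x + c ^ 2 := by
      intro x
      simp only [hf]
      have : indS S x ^ 2 = indS S x := by unfold indS; split_ifs <;> simp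
      linear_combination this
    simp only [this, Finset.sum_add_distrib, Finset.sum_sub_distrib, ← Finset.mul_sum, indS_sum, Finset.sum_const, Finset.card_univ, PX_card, nsmul_eq_mul]
    push_cast
    linear_combination c * hcp
  have hc1 : c < 1 := by rw [hc, div_lt_one (by linarith)]; linarith
  have hc0 : 0 ≤ c := by positivity
  have hN0 : 0 < s - c * s := by nlinarith
  have hX := (spec (l := l) hB f hf0 hN hN0 i).trans hq
  have hX2 : |II (mu l B) f| / (s - c * s) ≤ δ :=
    le_of_pow_le_pow_left₀ (by positivity) hδ hX
  rw [div_le_iff₀ hN0] at hX2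
  have h1 := count_le (l := l) hA hB
  rw [← hS] at h1
  have h2 : II (mu l B) (indS S) = II (mu l B) f + c ^ 2 * (p + 1) := by
    rw [← II_shift (mu_one l hB) f hf0 c]
    congr 1; funext x; simp [hf]
  rw [h2] at h1
  have h3 : c ^ 2 * (p + 1) ≤ s ^ 2 / p := by
    have : c ^ 2 * (p + 1) = s ^ 2 / (p + 1) := by rw [hc]; field_simp
    rw [this]; gcongr; linarith
  have h4 : δ * (s - c * s) ≤ δ * s := by gcongr; nlinarith
  have := le_abs_self (II (mu l B) f)
  linarith

end PartH

theorem stmt14 : ∀ ε : ℝ, 0 < ε → ∃ k : ℕ, ∀ (p : ℕ), p.Prime → Odd p → ∀ K : ℝ, 1 ≤ K →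
    ∀ A B : Finset (ZMod p), (0 : ZMod p) ∉ A → A.Nonempty → (p : ℝ) ^ ε ≤ (B.card : ℝ) →
    ((sumSet p A B).card : ℝ) ≤ K * A.card → ∀ lam : ZMod p, lam ≠ 0 →
    (((A ×ˢ A).filter fun x => x.1⁻¹ - x.2⁻¹ = lam).card : ℝ) ≤
      K ^ 2 * (A.card : ℝ) ^ 2 / p + 2 * K * (A.card : ℝ) * (p : ℝ) ^ (-(1 / (2 : ℝ) ^ (k + 2))) := by
  intro ε hε
  set η : ℝ := min ε (1 / 2) / 2000 with hη
  have hη0 : 0 < η := by rw [hη]; positivity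
  have hη1 : η * 2000 ≤ ε := by rw [hη]; have := min_le_left ε (1 / 2); linarith
  have hη2 : η * 2000 ≤ 1 / 2 := by rw [hη]; have := min_le_right ε (1 / 2); linarith
  obtain ⟨t, ht⟩ := exists_nat_ge ((5 / 2) / η)
  obtain ⟨k0, hk0⟩ := exists_nat_ge ((4096 : ℝ) ^ (1 / η))
  refine ⟨max (2 * t + 1) k0, ?_⟩
  set k := max (2 * t + 1) k0 with hk
  intro p hp hodd K hK A B hA hA' hB hAB lam hlam
  haveI : Fact p.Prime := ⟨hp⟩
  have hp1 : (1 : ℝ) ≤ p := by exact_mod_cast hp.one_le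
  have hp0 : (0 : ℝ) < p := by linarith
  have ha0 : (0 : ℝ) ≤ A.card := by positivity
  have hp2 : p ≠ 2 := by rintro rfl; exact absurd hodd (by decide)
  have hb0 : (0 : ℝ) < B.card := lt_of_lt_of_le (Real.rpow_pos_of_pos hp0 _) hB
  have hBne : B.Nonempty := by rw [← Finset.card_pos]; exact_mod_cast hb0
  by_cases hD : 4096 ≤ (p : ℝ) ^ η
  · set D := (p : ℝ) ^ η with hDdef
    have hD0 : 0 < D := by linarith
    have hD2000 : D ^ 2000 = (p : ℝ) ^ (η * 2000) := by
      rw [hDdef, ← Real.rpow_mul_natCast hp0.le]; norm_num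
    have hDB : D ^ 2000 ≤ B.card := by
      rw [hD2000]
      exact (Real.rpow_le_rpow_of_exponent_le hp1 hη1).trans hB
    have hDp : D ^ 2000 ≤ (p : ℝ) ^ (1 / 2 : ℝ) := by
      rw [hD2000]; exact Real.rpow_le_rpow_of_exponent_le hp1 hη2
    have hDt : (p : ℝ) ^ (5 / 2 : ℝ) ≤ D ^ t := by
      rw [hDdef, ← Real.rpow_mul_natCast hp0.le]
      apply Real.rpow_le_rpow_of_exponent_le hp1
      rw [div_le_iff₀ hη0] at ht; linarith
    set q := kk (ka lam B) (2 * t + 1) 1 with hqd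
    have hq0 : 0 < q := kk_pos (ka_SP lam hBne) _
    have e3 : (p : ℝ) ^ (5 / 2 : ℝ) * (p : ℝ) ^ (1 / 2 : ℝ) = (p : ℝ) ^ 3 := by
      rw [← Real.rpow_add hp0, ← Real.rpow_natCast]; norm_num
    have hq : q * (p : ℝ) ^ (5 / 2 : ℝ) ≤ 1 := by
      rcases growth hp2 hlam hD hDB t with h | h
      · refine le_trans ?_ h
        gcongr
      · have h2 := h.trans hDp
        rw [← e3] at h2
        have hh : (q * (p : ℝ) ^ (5 / 2 : ℝ)) * (p : ℝ) ^ (1 / 2 : ℝ) ≤ 1 * (p : ℝ) ^ (1 / 2 : ℝ) := by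
          rw [← hqd] at h2; linarith
        exact le_of_mul_le_mul_right hh (Real.rpow_pos_of_pos hp0 _)
    set δ : ℝ := 2 * (p : ℝ) ^ (-(1 / (2 : ℝ) ^ (2 * t + 3))) with hδ
    have hδ0 : 0 ≤ δ := by positivity
    have hqδ : 2 * (p : ℝ) ^ 2 * kk (ka lam B) (2 * t + 1) 1 ≤ δ ^ (2 ^ (2 * t + 2)) := by
      rw [← hqd, hδ, mul_pow, ← Real.rpow_mul_natCast hp0.le]
      have e4 : -(1 / (2 : ℝ) ^ (2 * t + 3)) * ((2 ^ (2 * t + 2) : ℕ) : ℝ) = -(1 / 2) := by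
        push_cast
        rw [pow_succ (2 : ℝ) (2 * t + 2)]; field_simp
      rw [e4]
      have e5 : (p : ℝ) ^ 2 * q ≤ (p : ℝ) ^ (-(1 / 2) : ℝ) := by
        have : (p : ℝ) ^ 2 = (p : ℝ) ^ (-(1 / 2) : ℝ) * (p : ℝ) ^ (5 / 2 : ℝ) := by
          rw [← Real.rpow_add hp0, ← Real.rpow_natCast]; norm_num
        rw [this]
        calc _ = (p : ℝ) ^ (-(1 / 2) : ℝ) * (q * (p : ℝ) ^ (5 / 2 : ℝ)) := by ring
          _ ≤ (p : ℝ) ^ (-(1 / 2) : ℝ) * 1 := by gcongr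
          _ = _ := by ring
      have e6 : (2 : ℝ) ≤ 2 ^ (2 ^ (2 * t + 2)) := by
        calc (2 : ℝ) = 2 ^ 1 := by norm_num
          _ ≤ _ := pow_le_pow_right₀ (by norm_num) Nat.one_le_two_pow
      calc 2 * (p : ℝ) ^ 2 * q = 2 * ((p : ℝ) ^ 2 * q) := by ring
        _ ≤ _ := by gcongr
    have hmain := mainN (l := lam) hA hA' hBne (2 * t) hδ0 hqδ
    refine hmain.trans ?_
    have hδk : δ ≤ 2 * (p : ℝ) ^ (-(1 / (2 : ℝ) ^ (k + 2))) := by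
      rw [hδ]
      apply mul_le_mul_of_nonneg_left _ (by norm_num)
      apply Real.rpow_le_rpow_of_exponent_le hp1
      apply neg_le_neg
      apply one_div_le_one_div_of_le (by positivity)
      apply pow_le_pow_right₀ (by norm_num)
      have := le_max_left (2 * t + 1) k0
      omega
    calc _ ≤ (K * A.card) ^ 2 / p + (2 * (p : ℝ) ^ (-(1 / (2 : ℝ) ^ (k + 2)))) * (K * A.card) := by gcongr
      _ = _ := by ring
  · push Not at hD
    have hpk : (p : ℝ) ≤ 2 ^ (2 ^ (k + 2)) := by
      have h1 : (p : ℝ) ≤ (4096 : ℝ) ^ (1 / η) := by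
        have : (p : ℝ) = ((p : ℝ) ^ η) ^ (1 / η) := by
          rw [← Real.rpow_mul hp0.le, mul_one_div_cancel hη0.ne', Real.rpow_one]
        rw [this]
        exact Real.rpow_le_rpow (by positivity) hD.le (by positivity)
      have h2 : k0 ≤ 2 ^ (2 ^ (k + 2)) := by
        have a1 : k0 ≤ k := le_max_right _ _
        have a2 : k + 2 < 2 ^ (k + 2) := Nat.lt_two_pow_self
        have a3 : 2 ^ (k + 2) < 2 ^ (2 ^ (k + 2)) := Nat.lt_two_pow_self
        omega
      have h3 : (k0 : ℝ) ≤ 2 ^ (2 ^ (k + 2)) := by exact_mod_cast h2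
      linarith
    have hhalf : 1 ≤ 2 * (p : ℝ) ^ (-(1 / (2 : ℝ) ^ (k + 2))) := by
      rw [Real.rpow_neg hp0.le]
      have : (p : ℝ) ^ (1 / (2 : ℝ) ^ (k + 2)) ≤ 2 := by
        calc _ ≤ ((2 : ℝ) ^ (2 ^ (k + 2))) ^ (1 / (2 : ℝ) ^ (k + 2)) := by gcongr
          _ = 2 := by
            rw [← Real.rpow_natCast, ← Real.rpow_mul (by norm_num)]
            push_cast
            rw [mul_one_div_cancel (by positivity), Real.rpow_one]
      rw [← div_eq_mul_inv, le_div_iff₀ (Real.rpow_pos_of_pos hp0 _)]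
      linarith
    have hN : (((A ×ˢ A).filter fun x => x.1⁻¹ - x.2⁻¹ = lam).card : ℝ) ≤ A.card := by
      norm_cast
      apply Finset.card_le_card_of_injOn (fun a => a.1)
      · intro a ha
        simp only [mem_coe, mem_filter, mem_product] at ha ⊢
        exact ha.1.1
      · rintro ⟨a1, a2⟩ ha ⟨a1', a2'⟩ ha' he
        simp only [mem_coe, mem_filter, mem_product] at ha ha' he
        subst he
        have : a2⁻¹ = a2'⁻¹ := by linear_combination ha'.2 - ha.2
        rw [inv_inj] at this
        rw [this]
    have h5 : 0 ≤ K ^ 2 * (A.card : ℝ) ^ 2 / p := by positivity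
    calc _ ≤ _ := hN
      _ = 1 * A.card * 1 := by ring
      _ ≤ K * A.card * (2 * (p : ℝ) ^ (-(1 / (2 : ℝ) ^ (k + 2)))) := by gcongr
      _ ≤ _ := by linarith
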